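/- arXiv:0903.2864 — 2 statements merged into one kernel-verified Lean document; each statement's English description precedes it below -/
import Mathlib

section
/- Let n ≥ 7 and let x be a non-identity permutation in S_n. The permutation character of S_n acting by conjugation on the conjugacy class of x (equivalently, the permutation character of S_n on the cosets of the centralizer C_{S_n}(x)) is multiplicity-free if and only if x has one of the following cycle types: (i) x is a 2-cycle (cycle type (2,1^{n−2})); (ii) x is a 3-cycle (cycle type (3,1^{n−3})); (iii) x is an involution with at most one fixed point (cycle type (2^m) where n = 2m or n = 2m+1). -/
/-- The permutation character of `G` on the cosets of `H` is multiplicity-free: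
every irreducible complex representation of `G` has at most a one-dimensional
subspace of `H`-fixed vectors. -/
noncomputable def IsMultFree {G : Type} [Group G] (H : Subgroup G) : Prop :=
  ∀ V : FDRep ℂ G, CategoryTheory.Simple V →
    Module.finrank ℂ (Representation.invariants (V.ρ.comp H.subtype)) ≤ 1

/-! Sufficiency is Gelfand's trick: if `x` and each conjugate `y` of `x` can be exchanged by a
simultaneous conjugation, then every double coset of the centralizer is closed under inversion, so
the Hecke algebra is commutative and the permutation character is multiplicity-free.

For necessity, a multiplicity-free Hecke algebra is commutative, so products of double cosets
commute. For an arbitrary such subgroup `H` of the symmetric group this leaves at most two orbits of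
points; and as the edge functions on the complete graph with vanishing vertex sums (the Specht
module of shape `(n - 2, 2)`) are irreducible, the number of `H`-orbits of edges is at most one more
than the number of orbits of points. If `H` is the centralizer of `x`, then among the pairs of
points lying in cycles of equal length there are at most two orbits, which bounds the cycle lengths
by `3` and rules out all but a few cycle types for `n ≥ 7`. Three 3-cycles, and two 3-cycles with a
single fixed point, survive this count: for them explicit conjugates `y`, `z` of `x` contradict the
commutation of double cosets, which would give a `y'` such that `(y, z) ∼ (x, y')` and `(x, y) ∼
(y', z)` under simultaneous conjugation.
-/

section Linear

variable {k V : Type*} [Field k] [IsAlgClosed k] [AddCommGroup V] [Module k V]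
  [FiniteDimensional k V]

theorem finrank_le_one_of_pairwise_commute {S : Set (Module.End k V)}
    (hcomm : ∀ a ∈ S, ∀ b ∈ S, Commute a b)
    (hspan : ∀ v ≠ 0, Submodule.span k ((fun a : Module.End k V ↦ a v) '' S) = ⊤) :
    Module.finrank k V ≤ 1 := by
  rcases subsingleton_or_nontrivial V with _ | _
  · simp [Module.finrank_zero_of_subsingleton]
  have scalar : ∀ a ∈ S, ∃ c : k, a = algebraMap k (Module.End k V) c := by
    intro a ha
    obtain ⟨c, hc⟩ := Module.End.exists_eigenvalue a
    obtain ⟨w, hw⟩ := hc.exists_hasEigenvector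
    have htop : ⊤ ≤ a.eigenspace c := by
      rw [← hspan w hw.2, Submodule.span_le]
      rintro _ ⟨b, hb, rfl⟩
      have hab : a (b w) = b (a w) := congr($(hcomm a ha b hb) w)
      simp [hab, hw.apply_eq_smul]
    exact ⟨c, LinearMap.ext fun v ↦ Module.End.mem_eigenspace_iff.1 (htop trivial)⟩
  obtain ⟨v, hv⟩ := exists_ne (0 : V)
  refine finrank_le_one v fun w ↦ Submodule.mem_span_singleton.1 ?_
  suffices h : Submodule.span k ((fun a : Module.End k V ↦ a v) '' S) ≤ k ∙ v by
    exact h (hspan v hv ▸ Submodule.mem_top)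
  rw [Submodule.span_le]
  rintro _ ⟨a, ha, rfl⟩
  obtain ⟨c, rfl⟩ := scalar a ha
  simpa using! Submodule.smul_mem _ c (Submodule.mem_span_singleton_self v)

end Linear

section Irreducible

variable {G : Type} [Group G]

theorem isIrreducible_of_simple (V : FDRep ℂ G) [CategoryTheory.Simple V] :
    Representation.IsIrreducible V.ρ where
  exists_pair_ne := by
    refine ⟨⊥, ⊤, fun h ↦ CategoryTheory.id_nonzero V ?_⟩
    have hV (v : V) : v = 0 := by
      have : v ∈ (⊥ : Subrepresentation V.ρ) := h ▸ trivial
      exact this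
    ext v
    exact hV v
  eq_bot_or_eq_top W := by
    let ι : FDRep.of W.toRepresentation ⟶ V :=
      ⟨CategoryTheory.InducedCategory.homMk (ModuleCat.ofHom W.toSubmodule.subtype), fun g ↦ by
        ext1; rfl⟩
    have : CategoryTheory.Mono ι :=
      ⟨fun f g h ↦ by
        ext z
        exact congr(($h).hom.hom.hom z)⟩
    by_cases hι : ι = 0
    · left
      refine le_bot_iff.1 fun w hw ↦ ?_
      exact congr(($hι).hom.hom.hom (⟨w, hw⟩ : W.toSubmodule))
    · right
      have := (CategoryTheory.Simple.mono_isIso_iff_nonzero ι).2 hι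
      refine top_le_iff.1 fun v _ ↦ ?_
      have hv : (((CategoryTheory.inv ι).hom.hom.hom v : W.toSubmodule) : V) = v :=
        congr(($(CategoryTheory.IsIso.inv_hom_id ι)).hom.hom.hom v)
      rw [← hv]
      exact Subtype.property _

variable [Finite G]

theorem simple_of_isIrreducible [AddCommGroup V] [Module ℂ V] [FiniteDimensional ℂ V]
    (ρ : Representation ℂ G V) [ρ.IsIrreducible] : CategoryTheory.Simple (FDRep.of ρ) := by
  rw [FDRep.simple_iff_end_is_rank_one,
    ← (Representation.linHom.invariantsEquivFDRepHom _ _).finrank_eq]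
  exact (Representation.invariantsEquivIntertwiningMap ρ ρ).finrank_eq.trans
    (Representation.IsIrreducible.finrank_intertwiningMap_self ρ)

end Irreducible

section Hecke

open MonoidAlgebra

variable {G : Type} [Group G] (H : Subgroup G) [Fintype H]

/-- The sum of the elements of a finite subgroup in the complex group algebra, a scalar multiple of
the idempotent whose corner is the Hecke algebra of the subgroup. -/
noncomputable def subgroupSum : ℂ[G] := ∑ h : H, single (h : G) 1

variable {H}

theorem single_mul_subgroupSum {h : G} (hh : h ∈ H) :
    single h 1 * subgroupSum H = subgroupSum H := by
  simp only [subgroupSum, Finset.mul_sum, single_mul_single, mul_one]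
  exact Fintype.sum_equiv (Equiv.mulLeft (⟨h, hh⟩ : H)) _ _ fun _ ↦ rfl

theorem subgroupSum_mul_single {h : G} (hh : h ∈ H) :
    subgroupSum H * single h 1 = subgroupSum H := by
  simp only [subgroupSum, Finset.sum_mul, single_mul_single, mul_one]
  exact Fintype.sum_equiv (Equiv.mulRight (⟨h, hh⟩ : H)) _ _ fun _ ↦ rfl

variable (H) in
/-- The sum over `H a H b H`, with multiplicity, in the complex group algebra: up to a scalar, the
product of the double cosets `H a H` and `H b H` in the Hecke algebra of `H`. -/
noncomputable def heckeMul (a b : G) : ℂ[G] :=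
  subgroupSum H * single a 1 * subgroupSum H * single b 1 * subgroupSum H

theorem heckeMul_eq_sum (a b : G) :
    heckeMul H a b = ∑ p : H × H × H, single (p.1 * a * p.2.1 * b * p.2.2 : G) 1 := by
  simp only [heckeMul, subgroupSum, Fintype.sum_prod_type, Finset.sum_mul, Finset.mul_sum,
    single_mul_single, mul_one]
  rw [Finset.sum_comm]
  conv_rhs => rw [Finset.sum_comm]; enter [2, b]; rw [Finset.sum_comm]

theorem heckeMul_comm_of_inv_mem_doubleCoset
    (hinv : ∀ g : G, ∃ a ∈ H, ∃ b ∈ H, g⁻¹ = a * g * b) (a b : G) :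
    heckeMul H a b = heckeMul H b a := by
  set e := subgroupSum H
  have inv_eq (g : G) : e * single g⁻¹ 1 * e = e * single g 1 * e := by
    obtain ⟨c, hc, d, hd, h⟩ := hinv g
    have hs : (single g⁻¹ 1 : ℂ[G]) = single c 1 * single g 1 * single d 1 := by
      simp only [h, single_mul_single, mul_one]
    rw [hs, ← mul_assoc, ← mul_assoc, subgroupSum_mul_single hc, mul_assoc,
      single_mul_subgroupSum hd]
  have sum_eq (a b : G) : heckeMul H a b = ∑ k : H, e * single (a * k * b) 1 * e := by
    have hs : single a 1 * e * single b 1 = ∑ k : H, (single (a * k * b) 1 : ℂ[G]) := by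
      simp only [e, subgroupSum, Finset.mul_sum, Finset.sum_mul, single_mul_single, mul_one]
    rw [← Finset.sum_mul, ← Finset.mul_sum, ← hs]
    simp only [heckeMul, e, mul_assoc]
  calc heckeMul H a b = heckeMul H b⁻¹ a⁻¹ := by
        rw [sum_eq, sum_eq]
        refine Fintype.sum_equiv (Equiv.inv H) _ _ fun k ↦ ?_
        rw [← inv_eq]
        simp [mul_assoc]
    _ = e * single b⁻¹ 1 * e * single a⁻¹ 1 * e := rfl
    _ = e * single b 1 * (e * single a⁻¹ 1 * e) := by rw [inv_eq b]; simp only [mul_assoc]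
    _ = heckeMul H b a := by rw [inv_eq a]; simp only [heckeMul, e, mul_assoc]

variable {V : Type} [AddCommGroup V] [Module ℂ V]

theorem asAlgebraHom_subgroupSum_mem_invariants (ρ : Representation ℂ G V) (v : V) :
    ρ.asAlgebraHom (subgroupSum H) v ∈ Representation.invariants (ρ.comp H.subtype) := by
  intro h
  have := congr(ρ.asAlgebraHom $(single_mul_subgroupSum h.2) v)
  simpa using this

theorem asAlgebraHom_subgroupSum_of_mem_invariants (ρ : Representation ℂ G V) {v : V}
    (hv : v ∈ Representation.invariants (ρ.comp H.subtype)) :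
    ρ.asAlgebraHom (subgroupSum H) v = (Fintype.card H : ℂ) • v := by
  have hv (h : H) : ρ h v = v := hv h
  simp [subgroupSum, hv, Nat.cast_smul_eq_nsmul]

theorem span_range_eq_top (ρ : Representation ℂ G V) [ρ.IsIrreducible] {v : V} (hv : v ≠ 0) :
    Submodule.span ℂ (Set.range fun g ↦ ρ g v) = ⊤ := by
  let W : Subrepresentation ρ :=
    { toSubmodule := Submodule.span ℂ (Set.range fun g ↦ ρ g v)
      apply_mem_toSubmodule g w hw := by
        suffices Submodule.span ℂ (Set.range fun g ↦ ρ g v) ≤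
            (Submodule.span ℂ (Set.range fun g ↦ ρ g v)).comap (ρ g) from this hw
        rw [Submodule.span_le]
        rintro _ ⟨h, rfl⟩
        exact Submodule.subset_span ⟨g * h, by simp⟩ }
  have hvW : v ∈ W := Submodule.subset_span ⟨1, by simp⟩
  rcases eq_bot_or_eq_top W with h | h
  · exact absurd (h ▸ hvW : v ∈ (⊥ : Subrepresentation ρ)) hv
  · exact congr(($h).toSubmodule)

theorem isMultFree_of_heckeMul_comm (hcomm : ∀ a b : G, heckeMul H a b = heckeMul H b a) :
    IsMultFree H := by
  intro V _
  let ρ : Representation ℂ G V := V.ρ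
  have : ρ.IsIrreducible := isIrreducible_of_simple V
  let I := Representation.invariants (ρ.comp H.subtype)
  let E : V →ₗ[ℂ] I :=
    (ρ.asAlgebraHom (subgroupSum H)).codRestrict I (asAlgebraHom_subgroupSum_mem_invariants ρ)
  let T (g : G) : Module.End ℂ I := E ∘ₗ ρ g ∘ₗ I.subtype
  have hN : (Fintype.card H : ℂ) ≠ 0 := Nat.cast_ne_zero.2 Fintype.card_ne_zero
  have E_coe (u : I) : E u = (Fintype.card H : ℂ) • u :=
    Subtype.ext (asAlgebraHom_subgroupSum_of_mem_invariants ρ u.2)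
  have E_surjective : LinearMap.range E = ⊤ := LinearMap.range_eq_top.2 fun u ↦
    ⟨(Fintype.card H : ℂ)⁻¹ • u, by rw [map_smul, E_coe, inv_smul_smul₀ hN]⟩
  refine finrank_le_one_of_pairwise_commute (S := Set.range T) ?_ fun v hv ↦ ?_
  · rintro _ ⟨a, rfl⟩ _ ⟨b, rfl⟩
    refine LinearMap.ext fun u ↦ smul_right_injective _ hN ?_
    have h : E (ρ a (E (ρ b (E u)))) = E (ρ b (E (ρ a (E u)))) := by
      ext; simpa [heckeMul, E] using congr(ρ.asAlgebraHom $(hcomm a b) u)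
    simpa only [E_coe, map_smul, SetLike.val_smul] using! h
  · rw [← Set.range_comp, ← E_surjective, ← Submodule.map_top,
      ← span_range_eq_top ρ (v := (v : V)) (by simpa using hv), Submodule.map_span,
      ← Set.range_comp]
    rfl

theorem asAlgebraHom_ofModule' {G M : Type} [Group G] [AddCommGroup M] [Module ℂ M] [Module ℂ[G] M]
    [IsScalarTower ℂ ℂ[G] M] (r : ℂ[G]) (m : M) :
    (Representation.ofModule' (k := ℂ) (G := G) M).asAlgebraHom r m = r • m := by
  simp [Representation.asAlgebraHom, Representation.ofModule']

theorem isIrreducible_ofModule' {G M : Type} [Group G] [AddCommGroup M] [Module ℂ M] [Module ℂ[G] M]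
    [IsScalarTower ℂ ℂ[G] M] [IsSimpleModule ℂ[G] M] :
    (Representation.ofModule' (k := ℂ) (G := G) M).IsIrreducible := by
  let ρ := Representation.ofModule' (k := ℂ) (G := G) M
  let e : ρ.asModule ≃ₗ[ℂ[G]] M :=
    { ρ.asModuleEquiv with map_smul' := asAlgebraHom_ofModule' (M := M) }
  exact (Representation.irreducible_iff_isSimpleModule_asModule _).2 (IsSimpleModule.congr e)

theorem heckeMul_comm_of_isMultFree [Finite G] (hH : IsMultFree H) (a b : G) :
    heckeMul H a b = heckeMul H b a := by
  have on_simple (S : Submodule ℂ[G] ℂ[G]) (hS : IsSimpleModule ℂ[G] S) (s : S) :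
      heckeMul H a b • s = heckeMul H b a • s := by
    have : FiniteDimensional ℂ S := inferInstanceAs (FiniteDimensional ℂ (S.restrictScalars ℂ))
    let ρ := Representation.ofModule' (k := ℂ) (G := G) S
    have : ρ.IsIrreducible := isIrreducible_ofModule'
    obtain ⟨v, hv⟩ := finrank_le_one_iff.1 (hH (FDRep.of ρ) (simple_of_isIrreducible ρ))
    have proj (t : S) : ∃ c : ℂ, subgroupSum H • t = c • (v : S) := by
      obtain ⟨c, hc⟩ := hv ⟨_, asAlgebraHom_subgroupSum_mem_invariants ρ t⟩
      exact ⟨c, (asAlgebraHom_ofModule' _ t).symm.trans congr(Subtype.val $hc.symm)⟩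
    obtain ⟨c, hc⟩ := proj s
    obtain ⟨ca, ha⟩ := proj (single a (1 : ℂ) • (v : S))
    obtain ⟨cb, hb⟩ := proj (single b (1 : ℂ) • (v : S))
    simp only [heckeMul, mul_smul, hc, ha, hb, smul_comm (_ : ℂ[G]) (_ : ℂ)]
    rw [smul_comm ca cb]
  have on_all (s : ℂ[G]) : heckeMul H a b • s = heckeMul H b a • s := by
    have hs : s ∈ sSup {S : Submodule ℂ[G] ℂ[G] | IsSimpleModule ℂ[G] S} := by
      rw [IsSemisimpleModule.sSup_simples_eq_top]
      trivial
    rw [sSup_eq_iSup'] at hs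
    induction hs using Submodule.iSup_induction' with
    | mem S s hs => exact congr(($(on_simple S S.2 ⟨s, hs⟩) : ℂ[G]))
    | zero => simp only [smul_zero]
    | add s t _ _ hs ht => rw [smul_add, hs, ht, smul_add]
  simpa only [smul_eq_mul, mul_one] using on_all 1

theorem isMultFree_of_inv_mem_doubleCoset [Finite G] {H : Subgroup G}
    (hinv : ∀ g : G, ∃ a ∈ H, ∃ b ∈ H, g⁻¹ = a * g * b) : IsMultFree H := by
  have := Fintype.ofFinite H
  exact isMultFree_of_heckeMul_comm (heckeMul_comm_of_inv_mem_doubleCoset hinv)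

theorem IsMultFree.mul_mem_doubleCosets [Finite G] {H : Subgroup G} (hH : IsMultFree H) (g h : G) :
    ∃ a ∈ H, ∃ b ∈ H, ∃ c ∈ H, g * h = a * h * b * g * c := by
  have := Fintype.ofFinite H
  classical
  have hcoeff := congr(($(heckeMul_comm_of_isMultFree hH g h)).coeff (g * h))
  simp only [heckeMul_eq_sum, coeff_sum, Finsupp.finsetSum_apply, coeff_single,
    Finsupp.single_apply, Finset.sum_boole] at hcoeff
  have hpos : 0 < Finset.card {p : H × H × H | (p.1 * g * p.2.1 * h * p.2.2 : G) = g * h} :=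
    Finset.card_pos.2 ⟨1, by simp⟩
  rw [Nat.cast_inj.1 hcoeff, Finset.card_pos] at hpos
  obtain ⟨⟨a, b, c⟩, habc⟩ := hpos
  exact ⟨a, a.2, b, b.2, c, c.2, (Finset.mem_filter.1 habc).2.symm⟩

end Hecke

section IrreducibilityCriterion

variable {G V : Type} [Group G] [AddCommGroup V] [Module ℂ V] {H : Subgroup G}

theorem exists_mem_invariants_apply_ne_zero [Finite H] (ρ : Representation ℂ G V) {l : V →ₗ[ℂ] ℂ}
    (hl : ∀ h ∈ H, l ∘ₗ ρ h = l) (hne : ∀ v ≠ 0, ∃ g, l (ρ g v) ≠ 0)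
    {W : Subrepresentation ρ} (hW : W ≠ ⊥) :
    ∃ w ∈ W, w ∈ Representation.invariants (ρ.comp H.subtype) ∧ l w ≠ 0 := by
  have := Fintype.ofFinite H
  obtain ⟨v, hvW, hv⟩ : ∃ v ∈ W, v ≠ 0 := by
    by_contra! h
    exact hW (le_bot_iff.1 h)
  obtain ⟨g, hg⟩ := hne v hv
  refine ⟨ρ.asAlgebraHom (subgroupSum H) (ρ g v), ?_,
    asAlgebraHom_subgroupSum_mem_invariants ρ _, ?_⟩
  · exact ρ.asAlgebraHom_mem_of_forall_mem W.toSubmodule (fun g _ hv ↦ W.apply_mem_toSubmodule g hv)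
      _ (W.apply_mem_toSubmodule g hvW) _
  · have hl (h : H) (w : V) : l (ρ h w) = l w := congr($(hl h h.2) w)
    simpa [subgroupSum, hl] using hg

theorem isIrreducible_of_forall_exists_apply_ne_zero [Finite G] [Nontrivial V]
    (ρ : Representation ℂ G V) {l : V →ₗ[ℂ] ℂ}
    (hl : ∀ h ∈ H, l ∘ₗ ρ h = l) (hne : ∀ v ≠ 0, ∃ g, l (ρ g v) ≠ 0)
    (hinj : ∀ v ∈ Representation.invariants (ρ.comp H.subtype), l v = 0 → v = 0) :
    ρ.IsIrreducible where
  exists_pair_ne := by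
    obtain ⟨v, hv⟩ := exists_ne (0 : V)
    exact ⟨⊥, ⊤, fun h ↦ hv (h ▸ trivial : v ∈ (⊥ : Subrepresentation ρ))⟩
  eq_bot_or_eq_top W := by
    by_contra! hW
    obtain ⟨W', hdisj, hcodisj⟩ := exists_isCompl W
    have hW' : W' ≠ ⊥ := by
      rintro rfl
      exact hW.2 (codisjoint_bot.1 hcodisj)
    obtain ⟨w, hwW, hw, hlw⟩ := exists_mem_invariants_apply_ne_zero ρ hl hne hW.1
    obtain ⟨w', hwW', hw', hlw'⟩ := exists_mem_invariants_apply_ne_zero ρ hl hne hW'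
    have heq : l w' • w - l w • w' = 0 :=
      hinj _ (Submodule.sub_mem _ (Submodule.smul_mem _ _ hw) (Submodule.smul_mem _ _ hw'))
        (by simp [mul_comm])
    have hmem : w ∈ W ⊓ W' := by
      refine ⟨hwW, (W'.toSubmodule.smul_mem_iff hlw').1 ?_⟩
      rw [sub_eq_zero.1 heq]
      exact W'.toSubmodule.smul_mem _ hwW'
    have hw0 : w = 0 := (hdisj.eq_bot ▸ hmem : w ∈ (⊥ : Subrepresentation ρ))
    exact hlw (by simp [hw0])

end IrreducibilityCriterion

/-- Two pairs of group elements are simultaneously conjugate. On pairs of conjugates of a fixed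
element, the classes of this relation are the orbitals of the conjugation action. -/
def SimulConj {G : Type*} [Group G] (x y x' y' : G) : Prop :=
  ∃ g, SemiconjBy g x x' ∧ SemiconjBy g y y'

section Centralizer

variable {G : Type} [Group G] [Finite G] {x y z : G}

theorem isMultFree_centralizer_of_forall_simulConj (h : ∀ y, IsConj x y → SimulConj x y y x) :
    IsMultFree (Subgroup.centralizer {x}) := by
  refine isMultFree_of_inv_mem_doubleCoset fun g ↦ ?_
  obtain ⟨s, hxy, hyx⟩ := h (g * x * g⁻¹) (isConj_iff.2 ⟨g, rfl⟩)
  have hg : SemiconjBy g x (g * x * g⁻¹) := SemiconjBy.conj_mk g x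
  refine ⟨(s * g)⁻¹, ?_, g⁻¹ * s, ?_, by group⟩
  · exact Subgroup.mem_centralizer_singleton_iff.2 (hyx.mul_left hg).inv_symm_left
  · exact Subgroup.mem_centralizer_singleton_iff.2 (hg.inv_symm_left.mul_left hxy)

theorem IsMultFree.exists_simulConj (hx : IsMultFree (Subgroup.centralizer {x}))
    (hy : IsConj x y) (hz : IsConj x z) : ∃ y', SimulConj y z x y' ∧ SimulConj x y y' z := by
  obtain ⟨g, rfl⟩ := isConj_iff.1 hy
  obtain ⟨h, rfl⟩ := isConj_iff.1 hz
  obtain ⟨a, ha, b, hb, c, hc, habc⟩ := hx.mul_mem_doubleCosets g (g⁻¹ * h)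
  have hg : SemiconjBy g x (g * x * g⁻¹) := SemiconjBy.conj_mk g x
  have hh : SemiconjBy h x (h * x * h⁻¹) := SemiconjBy.conj_mk h x
  have ha : SemiconjBy a x x := Subgroup.mem_centralizer_singleton_iff.1 ha
  have hb : SemiconjBy b x x := Subgroup.mem_centralizer_singleton_iff.1 hb
  have hc : SemiconjBy c x x := Subgroup.mem_centralizer_singleton_iff.1 hc
  have hk : SemiconjBy (a * (g⁻¹ * h)) x _ := SemiconjBy.conj_mk _ x
  refine ⟨_, ⟨a * g⁻¹, ha.mul_left hg.inv_symm_left, ?_⟩, ⟨a * (g⁻¹ * h) * b, hk.mul_left hb, ?_⟩⟩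
  · simpa [mul_assoc] using hk.mul_left hh.inv_symm_left
  · have hbg : a * (g⁻¹ * h) * b = h * c⁻¹ * g⁻¹ := by
      rw [eq_mul_inv_iff_mul_eq, eq_mul_inv_iff_mul_eq, ← habc, mul_inv_cancel_left]
    exact hbg ▸ (hh.mul_left hc.inv_symm_left).mul_left hg.inv_symm_left

end Centralizer

section Twist

variable {β : Type*}

/- On the orbit of a representative `r` under the first components, `σ` sends `γ.1 r` to `γ.2 r`;
symmetry of `Γ` under exchange makes `σ` an involution. -/
theorem exists_perm_intertwining_of_swap_mem {Γ : Subgroup (Equiv.Perm β × Equiv.Perm β)}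
    (hswap : ∀ γ ∈ Γ, γ.swap ∈ Γ) (hfix : ∀ γ ∈ Γ, ∀ b, γ.1 b = b → γ.2 b = b) (p : β) :
    ∃ σ : Equiv.Perm β, σ p = p ∧ ∀ γ ∈ Γ, ∀ b, σ (γ.1 b) = γ.2 (σ b) := by
  classical
  let _ : MulAction Γ β := MulAction.compHom β ((MonoidHom.fst _ _).comp Γ.subtype)
  let rep (b : β) : β :=
    Function.update Quotient.out (⟦p⟧ : MulAction.orbitRel.Quotient Γ β) p ⟦b⟧
  have rep_mk (b : β) : (⟦rep b⟧ : MulAction.orbitRel.Quotient Γ β) = ⟦b⟧ := by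
    by_cases h : (⟦b⟧ : MulAction.orbitRel.Quotient Γ β) = ⟦p⟧
    · simp only [rep, h, Function.update_self]
    · simp only [rep, Function.update_of_ne h, Quotient.out_eq]
  have rep_p : rep p = p := Function.update_self ..
  have rep_apply (γ) (hγ : γ ∈ Γ) (b : β) : rep (γ.1 b) = rep b := by
    have : (⟦γ.1 b⟧ : MulAction.orbitRel.Quotient Γ β) = ⟦b⟧ := Quotient.sound ⟨⟨γ, hγ⟩, rfl⟩
    simp only [rep, this]
  have exists_apply_rep (b : β) : ∃ γ ∈ Γ, γ.1 (rep b) = b := by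
    obtain ⟨γ, hγ⟩ := Quotient.exact (rep_mk b).symm
    exact ⟨γ, γ.2, hγ⟩
  choose δ hδ hδb using exists_apply_rep
  let σ (b : β) : β := (δ b).2 (rep b)
  have σ_eq (γ) (hγ : γ ∈ Γ) (b : β) : σ (γ.1 (rep b)) = γ.2 (rep b) := by
    have hrep : rep (γ.1 (rep b)) = rep b := by
      rw [rep_apply γ hγ, ← rep_apply _ (hδ b), hδb]
    have hδ1 : (δ (γ.1 (rep b))).1 (rep b) = γ.1 (rep b) := by
      simpa only [hrep] using hδb (γ.1 (rep b))
    have := hfix _ (mul_mem (inv_mem hγ) (hδ (γ.1 (rep b)))) (rep b)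
    simp only [Prod.fst_mul, Prod.snd_mul, Prod.fst_inv, Prod.snd_inv, Equiv.Perm.mul_apply,
      Equiv.Perm.inv_eq_iff_eq] at this
    simpa only [σ, hrep] using this hδ1
  have σ_apply (γ) (hγ : γ ∈ Γ) (b : β) : σ (γ.1 b) = γ.2 (σ b) := by
    conv_lhs => rw [← hδb b]
    exact σ_eq (γ * δ b) (mul_mem hγ (hδ b)) b
  have σ_involutive : Function.Involutive σ := fun b ↦
    (σ_eq _ (hswap _ (hδ b)) b).trans (hδb b)
  exact ⟨σ_involutive.toPerm, by simpa [rep_p] using σ_eq 1 (one_mem Γ) p, σ_apply⟩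

end Twist

section Dihedral

variable {G : Type*} [Group G] {x y : G}

theorem semiconjBy_mul_zpow_left (hx : x * x = 1) (hy : y * y = 1) (k : ℤ) :
    SemiconjBy x ((x * y) ^ k) ((x * y) ^ (-k)) := by
  have h : SemiconjBy x (x * y) (x * y)⁻¹ := by
    simp only [SemiconjBy, mul_inv_rev, inv_eq_of_mul_eq_one_left hx,
      inv_eq_of_mul_eq_one_left hy, ← mul_assoc, hx, one_mul, mul_assoc y, mul_one]
  simpa only [inv_zpow'] using h.zpow_right k

theorem semiconjBy_mul_zpow_right (hx : x * x = 1) (hy : y * y = 1) (k : ℤ) :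
    SemiconjBy y ((x * y) ^ k) ((x * y) ^ (-k)) := by
  have h : SemiconjBy y (x * y) (x * y)⁻¹ := by
    simp only [SemiconjBy, mul_inv_rev, inv_eq_of_mul_eq_one_left hx,
      inv_eq_of_mul_eq_one_left hy, mul_assoc]
  simpa only [inv_zpow'] using h.zpow_right k

theorem isConj_or_isConj_zpow_mul (hx : x * x = 1) (hy : y * y = 1) (k : ℤ) :
    IsConj x ((x * y) ^ k * x) ∨ IsConj y ((x * y) ^ k * x) := by
  have hconj (l : ℤ) : x * ((x * y) ^ l)⁻¹ = (x * y) ^ l * x := by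
    simpa only [zpow_neg, inv_inv] using (semiconjBy_mul_zpow_left hx hy (-l)).eq
  obtain ⟨l, rfl | rfl⟩ := Int.even_or_odd' k
  · refine .inl (isConj_iff.2 ⟨(x * y) ^ l, ?_⟩)
    rw [mul_assoc, hconj, ← mul_assoc, ← zpow_add, two_mul]
  · refine .inr (isConj_iff.2 ⟨(x * y) ^ l * x, ?_⟩)
    calc (x * y) ^ l * x * y * ((x * y) ^ l * x)⁻¹
        = (x * y) ^ l * (x * y) * (x⁻¹ * ((x * y) ^ l)⁻¹) := by group
      _ = (x * y) ^ (2 * l + 1) * x := by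
        rw [inv_eq_of_mul_eq_one_left hx, hconj, ← mul_assoc, ← zpow_add_one, ← zpow_add]
        congr 2
        ring

theorem exists_zpow_of_mem_closure_swap_pair (hx : x * x = 1) (hy : y * y = 1) {γ : G × G}
    (hγ : γ ∈ Subgroup.closure {(x, y), (y, x)}) :
    ∃ k : ℤ, γ = ((x * y) ^ k, (x * y) ^ (-k)) ∨ γ = ((x * y) ^ k * x, (x * y) ^ (-k) * y) := by
  have hgen : ∀ δ ∈ ({(x, y), (y, x)} : Set (G × G)),
      ∃ j : ℤ, δ = ((x * y) ^ j * x, (x * y) ^ (-j) * y) := by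
    rintro δ (rfl | rfl)
    · exact ⟨0, by simp⟩
    · exact ⟨-1, by simp [mul_assoc, hy, inv_eq_of_mul_eq_one_left hy]⟩
  have hmulx (j k : ℤ) : (x * y) ^ j * x * (x * y) ^ k = (x * y) ^ (j - k) * x := by
    rw [mul_assoc, (semiconjBy_mul_zpow_left hx hy k).eq, ← mul_assoc, ← zpow_add, sub_eq_add_neg]
  have hmuly (j k : ℤ) : (x * y) ^ j * y * (x * y) ^ k = (x * y) ^ (j - k) * y := by
    rw [mul_assoc, (semiconjBy_mul_zpow_right hx hy k).eq, ← mul_assoc, ← zpow_add, sub_eq_add_neg]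
  have hmul (j k : ℤ) : ((x * y) ^ j * x, (x * y) ^ (-j) * y) *
      ((x * y) ^ k * x, (x * y) ^ (-k) * y) = ((x * y) ^ (j - k), (x * y) ^ (-(j - k))) := by
    simp only [Prod.mk_mul_mk, ← mul_assoc, hmulx, hmuly]
    simp only [mul_assoc, hx, hy, mul_one, neg_sub_neg, neg_sub]
  induction hγ using Subgroup.closure_induction_left with
  | one => exact ⟨0, by simp [Prod.one_eq_mk]⟩
  | mul_left δ hδ γ _ ih =>
    obtain ⟨j, rfl⟩ := hgen δ hδ
    obtain ⟨k, rfl | rfl⟩ := ih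
    · exact ⟨j - k, .inr (by simp only [Prod.mk_mul_mk, hmulx, hmuly, neg_sub_neg, neg_sub])⟩
    · exact ⟨j - k, .inl (hmul j k)⟩
  | inv_mul_cancel δ hδ γ _ ih =>
    obtain ⟨j, rfl⟩ := hgen δ hδ
    rw [inv_eq_of_mul_eq_one_left ((hmul j j).trans (by simp [Prod.one_eq_mk]))]
    obtain ⟨k, rfl | rfl⟩ := ih
    · exact ⟨j - k, .inr (by simp only [Prod.mk_mul_mk, hmulx, hmuly, neg_sub_neg, neg_sub])⟩
    · exact ⟨j - k, .inl (hmul j k)⟩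

theorem inv_eq_or_isConj_of_mem_closure_swap_pair (hx : x * x = 1) (hy : y * y = 1) {γ : G × G}
    (hγ : γ ∈ Subgroup.closure {(x, y), (y, x)}) :
    γ.2 = γ.1⁻¹ ∨ IsConj x γ.1 ∨ IsConj y γ.1 := by
  obtain ⟨k, rfl | rfl⟩ := exists_zpow_of_mem_closure_swap_pair hx hy hγ
  · exact .inl (zpow_neg _ k)
  · exact .inr (isConj_or_isConj_zpow_mul hx hy k)

end Dihedral

section Involution

variable {α : Type*} {x y : Equiv.Perm α}

theorem exists_perm_exchanging_of_fixedPointFree (hx : x * x = 1) (hy : y * y = 1)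
    (hxf : ∀ a, x a ≠ a) (hyf : ∀ a, y a ≠ a) (p : α) :
    ∃ σ : Equiv.Perm α, σ p = p ∧ SemiconjBy σ x y ∧ SemiconjBy σ y x := by
  have fixedPointFree_of_isConj {z w : Equiv.Perm α} (hz : ∀ a, z a ≠ a) (h : IsConj z w) (a : α) :
      w a ≠ a := by
    obtain ⟨g, rfl⟩ := isConj_iff.1 h
    simpa [← Equiv.Perm.eq_inv_iff_eq] using hz (g⁻¹ a)
  let Γ : Subgroup (Equiv.Perm α × Equiv.Perm α) := Subgroup.closure {(x, y), (y, x)}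
  have hxΓ : (x, y) ∈ Γ := Subgroup.subset_closure (.inl rfl)
  have hyΓ : (y, x) ∈ Γ := Subgroup.subset_closure (.inr rfl)
  have swap_mem :
      Γ ≤ Γ.comap (MulEquiv.prodComm : Equiv.Perm α × Equiv.Perm α ≃* _).toMonoidHom := by
    rw [Subgroup.closure_le]
    rintro _ (rfl | rfl)
    exacts [hyΓ, hxΓ]
  obtain ⟨σ, hσp, hσ⟩ := exists_perm_intertwining_of_swap_mem swap_mem (fun γ hγ a ha ↦ by
    obtain h | h | h := inv_eq_or_isConj_of_mem_closure_swap_pair hx hy hγ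
    · rwa [h, Equiv.Perm.inv_eq_iff_eq, eq_comm]
    · exact absurd ha (fixedPointFree_of_isConj hxf h a)
    · exact absurd ha (fixedPointFree_of_isConj hyf h a)) p
  exact ⟨σ, hσp, Equiv.ext (hσ _ hxΓ), Equiv.ext (hσ _ hyΓ)⟩

theorem optionCongr_mul (x y : Equiv.Perm α) :
    (x * y).optionCongr = x.optionCongr * y.optionCongr :=
  Equiv.optionCongr_trans y x |>.symm ▸ rfl

/-- Adjoins to `α` a new point, interchanged with `a`. If `a` is the only fixed point of the
involution `x`, the result is a fixed-point-free involution. -/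
def adjoinPartner [DecidableEq α] (x : Equiv.Perm α) (a : α) : Equiv.Perm (Option α) :=
  x.optionCongr * Equiv.swap none (some a)

variable [DecidableEq α] {a b : α}

theorem adjoinPartner_none (ha : x a = a) : adjoinPartner x a none = some a := by
  simp [adjoinPartner, ha]

theorem adjoinPartner_mul_self (hx : x * x = 1) (ha : x a = a) :
    adjoinPartner x a * adjoinPartner x a = 1 := by
  have hcomm : Equiv.swap none (some a) * x.optionCongr =
      x.optionCongr * Equiv.swap none (some a) := by
    simpa [ha] using (Equiv.mul_swap_eq_swap_mul x.optionCongr none (some a)).symm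
  have hxx : x.optionCongr * x.optionCongr = 1 := by
    rw [← optionCongr_mul, hx, Equiv.optionCongr_one]
  rw [adjoinPartner, mul_assoc, ← mul_assoc (Equiv.swap _ _), hcomm, mul_assoc x.optionCongr,
    Equiv.swap_mul_self, mul_one, hxx]

theorem adjoinPartner_ne_self (hxa : ∀ i, x i = i ↔ i = a) (i : Option α) :
    adjoinPartner x a i ≠ i := by
  rcases i with _ | i
  · simp [adjoinPartner]
  · by_cases hi : i = a
    · simp [adjoinPartner, hi]
    · simpa [adjoinPartner, Equiv.swap_apply_of_ne_of_ne, hi] using mt (hxa i).1 hi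

theorem semiconjBy_of_adjoinPartner {τ : Equiv.Perm α} (hτ : τ a = b)
    (h : SemiconjBy τ.optionCongr (adjoinPartner x a) (adjoinPartner y b)) :
    SemiconjBy τ x y := by
  have hswap : τ.optionCongr * Equiv.swap none (some a) =
      Equiv.swap none (some b) * τ.optionCongr := by
    simpa [hτ] using Equiv.mul_swap_eq_swap_mul τ.optionCongr none (some a)
  refine Equiv.optionCongr_injective (mul_right_cancel (b := Equiv.swap none (some a)) ?_)
  simpa only [SemiconjBy, adjoinPartner, optionCongr_mul, mul_assoc, ← hswap] using h

end Involution

theorem exists_perm_exchanging_of_unique_fixed {α : Type*} {x y : Equiv.Perm α} {a b : α}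
    (hx : x * x = 1) (hy : y * y = 1) (hxa : ∀ i, x i = i ↔ i = a) (hyb : ∀ i, y i = i ↔ i = b) :
    ∃ τ : Equiv.Perm α, SemiconjBy τ x y ∧ SemiconjBy τ y x := by
  classical
  have ha : x a = a := (hxa a).2 rfl
  have hb : y b = b := (hyb b).2 rfl
  obtain ⟨σ, hσ, hxy, hyx⟩ := exists_perm_exchanging_of_fixedPointFree
    (adjoinPartner_mul_self hx ha) (adjoinPartner_mul_self hy hb)
    (adjoinPartner_ne_self hxa) (adjoinPartner_ne_self hyb) none
  obtain ⟨τ, rfl⟩ : ∃ τ : Equiv.Perm α, τ.optionCongr = σ :=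
    ⟨Equiv.removeNone σ, by simp [map_equiv_removeNone, hσ, Equiv.Perm.one_def]⟩
  have hab : τ a = b := by
    simpa [adjoinPartner_none, ha, hb] using Equiv.congr_fun hxy.eq none
  have hba : τ b = a := by
    simpa [adjoinPartner_none, ha, hb] using Equiv.congr_fun hyx.eq none
  exact ⟨τ, semiconjBy_of_adjoinPartner hab hxy, semiconjBy_of_adjoinPartner hba hyx⟩

theorem SimulConj.exchange_of_mul_self {α : Type*} {x y : Equiv.Perm α} (hx : x * x = 1)
    (hfix : ∀ i j, x i = i → x j = j → i = j) (hxy : IsConj x y) : SimulConj x y y x := by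
  classical
  obtain ⟨g, rfl⟩ := isConj_iff.1 hxy
  have hy : g * x * g⁻¹ * (g * x * g⁻¹) = 1 := by
    rw [conj_mul, hx, mul_one, mul_inv_cancel]
  have hfixed (i : α) : (g * x * g⁻¹) i = i ↔ x (g⁻¹ i) = g⁻¹ i := by
    rw [Equiv.Perm.eq_inv_iff_eq, Equiv.Perm.mul_apply, Equiv.Perm.mul_apply]
  by_cases h : ∃ a, x a = a
  · obtain ⟨a, ha⟩ := h
    have hxa (i : α) : x i = i ↔ i = a := ⟨fun hi ↦ hfix i a hi ha, fun hi ↦ hi ▸ ha⟩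
    exact exists_perm_exchanging_of_unique_fixed hx hy hxa (b := g a) fun i ↦ by
      rw [hfixed, hxa, Equiv.Perm.inv_eq_iff_eq]
  · push Not at h
    rcases isEmpty_or_nonempty α with _ | ⟨⟨p⟩⟩
    · exact ⟨1, Subsingleton.elim _ _, Subsingleton.elim _ _⟩
    · obtain ⟨σ, -, hσ⟩ := exists_perm_exchanging_of_fixedPointFree hx hy h
        (fun i ↦ (hfixed i).not.2 (h _)) p
      exact ⟨σ, hσ⟩

theorem isMultFree_centralizer_of_cycleType_eq_replicate_two {α : Type} [Fintype α] [DecidableEq α]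
    {x : Equiv.Perm α} {m : ℕ} (hx : x.cycleType = Multiset.replicate m 2)
    (hm : Fintype.card α ≤ 2 * m + 1) : IsMultFree (Subgroup.centralizer {x}) := by
  have hxx : x * x = 1 := by
    rw [← sq, ← orderOf_dvd_iff_pow_eq_one, ← Equiv.Perm.lcm_cycleType, hx, Multiset.lcm_dvd]
    exact fun b hb ↦ (Multiset.eq_of_mem_replicate hb).dvd
  have hfix : x.supportᶜ.card ≤ 1 := by
    rw [Finset.card_compl, ← Equiv.Perm.sum_cycleType, hx, Multiset.sum_replicate, smul_eq_mul]
    lia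
  refine isMultFree_centralizer_of_forall_simulConj fun y ↦
    .exchange_of_mul_self hxx fun i j hi hj ↦ ?_
  exact Finset.card_le_one.1 hfix i (by simpa using hi) j (by simpa using hj)

section ViaEmbedding

variable {ι α : Type*} {f g : ι ↪ α}

theorem exists_perm_exchanging_embeddings (h : ∀ i j, f i = g j → f j = g i) :
    ∃ σ : Equiv.Perm α, ∀ i, σ (f i) = g i ∧ σ (g i) = f i := by
  let σ : α → α := Function.extend f g (Function.extend g f id)
  have hσf (i : ι) : σ (f i) = g i := f.injective.extend_apply ..
  have hσg (i : ι) : σ (g i) = f i := by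
    by_cases hi : ∃ j, f j = g i
    · obtain ⟨j, hj⟩ := hi
      rw [← hj, hσf, h j i hj]
    · exact (Function.extend_apply' _ _ _ hi).trans (g.injective.extend_apply ..)
  have hσ : Function.Involutive σ := by
    intro a
    by_cases haf : ∃ i, f i = a
    · obtain ⟨i, rfl⟩ := haf
      rw [hσf, hσg]
    by_cases hag : ∃ i, g i = a
    · obtain ⟨i, rfl⟩ := hag
      rw [hσg, hσf]
    have ha : σ a = a :=
      (Function.extend_apply' _ _ _ haf).trans (Function.extend_apply' _ _ _ hag)
    rw [ha, ha]
  exact ⟨hσ.toPerm, fun i ↦ ⟨hσf i, hσg i⟩⟩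

theorem semiconjBy_viaEmbedding {σ : Equiv.Perm α} {k c d : Equiv.Perm ι} (hk : SemiconjBy k c d)
    (hσ : ∀ i, σ (f i) = g (k i)) : SemiconjBy σ (c.viaEmbedding f) (d.viaEmbedding g) := by
  refine Equiv.ext fun a ↦ ?_
  rw [Equiv.Perm.mul_apply, Equiv.Perm.mul_apply]
  by_cases ha : a ∈ Set.range f
  · obtain ⟨i, rfl⟩ := ha
    rw [c.viaEmbedding_apply, hσ, hσ, d.viaEmbedding_apply, ← Equiv.Perm.mul_apply, hk.eq,
      Equiv.Perm.mul_apply]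
  · have hσa : σ a ∉ Set.range g := by
      rintro ⟨i, hi⟩
      obtain ⟨j, rfl⟩ := k.surjective i
      exact ha ⟨j, σ.injective ((hσ j).trans hi)⟩
    rw [c.viaEmbedding_apply_of_notMem f a ha, d.viaEmbedding_apply_of_notMem g _ hσa]

theorem SimulConj.exchange_viaEmbedding {c k : Equiv.Perm ι} (hk : Commute k c)
    (h : ∀ i j, f i = g (k j) → f j = g (k i)) :
    SimulConj (c.viaEmbedding f) (c.viaEmbedding g) (c.viaEmbedding g) (c.viaEmbedding f) := by
  obtain ⟨σ, hσ⟩ := exists_perm_exchanging_embeddings (g := k.toEmbedding.trans g) h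
  refine ⟨σ, semiconjBy_viaEmbedding hk fun i ↦ (hσ i).1,
    semiconjBy_viaEmbedding hk.inv_left fun i ↦ ?_⟩
  simpa using (hσ (k⁻¹ i)).2

end ViaEmbedding

section ShortCycle

variable {α : Type} [Fintype α] [DecidableEq α] {x : Equiv.Perm α}

theorem exists_eq_finRotate_viaEmbedding {m : ℕ} (hm : 2 ≤ m) (hx : x.cycleType = {m}) :
    ∃ f : Fin m ↪ α, x = (finRotate m).viaEmbedding f := by
  have hcard : m ≤ Fintype.card α := by
    simpa [← Equiv.Perm.sum_cycleType, hx] using x.support.card_le_univ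
  obtain ⟨f⟩ := Function.Embedding.nonempty_of_card_le (α := Fin m) (by simpa using hcard)
  have hf : ((finRotate m).viaEmbedding f).cycleType = {m} :=
    (@Equiv.Perm.cycleType_extendDomain _ _ _ _ _ _ _ (Classical.decPred _) _ _).trans
      (cycleType_finRotate_of_le hm)
  obtain ⟨g, hg⟩ := isConj_iff.1 (Equiv.Perm.isConj_iff_cycleType_eq.2 (hf.trans hx.symm))
  refine ⟨f.trans g.toEmbedding, ?_⟩
  rw [← hg, mul_inv_eq_iff_eq_mul]
  exact semiconjBy_viaEmbedding (SemiconjBy.one_left _) fun _ ↦ rfl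

/- Writing `x` and its conjugate `y` as rotations along `f` and `g`, the partial injection `M` is
the overlap `i ↦ g⁻¹ (f i)`; re-indexing `g` by a rotation that makes it symmetric lets one
permutation exchange `f` and `g`. -/
theorem isMultFree_centralizer_of_cycleType_eq_singleton {m : ℕ} (hm : 2 ≤ m)
    (hrot : ∀ M : Fin m → Option (Fin m), (∀ i j l, M i = some l → M j = some l → i = j) →
      ∃ k : Fin m, ∀ i j, M i = some ((finRotate m ^ (k : ℕ)) j) →
        M j = some ((finRotate m ^ (k : ℕ)) i))
    (hx : x.cycleType = {m}) : IsMultFree (Subgroup.centralizer {x}) := by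
  refine isMultFree_centralizer_of_forall_simulConj fun y hxy ↦ ?_
  obtain ⟨f, hf⟩ := exists_eq_finRotate_viaEmbedding hm hx
  obtain ⟨g, hg⟩ := exists_eq_finRotate_viaEmbedding hm
    ((Equiv.Perm.isConj_iff_cycleType_eq.1 hxy).symm.trans hx)
  have hM (i j : Fin m) : Function.partialInv g (f i) = some j ↔ g j = f i :=
    g.injective.isPartialInv j (f i)
  obtain ⟨k, hk⟩ := hrot (fun i ↦ Function.partialInv g (f i)) fun i j l hi hj ↦
    f.injective (((hM i l).1 hi).symm.trans ((hM j l).1 hj))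
  rw [hf, hg]
  refine SimulConj.exchange_viaEmbedding ((Commute.refl _).pow_left k) fun i j hij ↦ ?_
  exact ((hM _ _).1 (hk i j ((hM _ _).2 hij.symm))).symm

theorem isMultFree_centralizer_of_cycleType_eq_two (hx : x.cycleType = {2}) :
    IsMultFree (Subgroup.centralizer {x}) :=
  isMultFree_centralizer_of_cycleType_eq_singleton le_rfl (by decide) hx

set_option maxRecDepth 10000 in
theorem isMultFree_centralizer_of_cycleType_eq_three (hx : x.cycleType = {3}) :
    IsMultFree (Subgroup.centralizer {x}) :=
  isMultFree_centralizer_of_cycleType_eq_singleton (by lia) (by decide) hx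

end ShortCycle

theorem IsMultFree.exists_apply_eq {α : Type} [Finite α] {H : Subgroup (Equiv.Perm α)}
    (hH : IsMultFree H) (i j k : α) : ∃ h ∈ H, h i = j ∨ h i = k ∨ h j = k := by
  classical
  by_contra! hsep
  obtain ⟨a, ha, b, hb, c, hc, heq⟩ :=
    hH.mul_mem_doubleCosets (Equiv.swap i j) (Equiv.swap j k)
  have hck : Equiv.swap i j (c k) = c k := Equiv.swap_apply_of_ne_of_ne
    (fun h ↦ (hsep c⁻¹ (inv_mem hc)).2.1 (Equiv.Perm.inv_eq_iff_eq.2 h.symm))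
    (fun h ↦ (hsep c⁻¹ (inv_mem hc)).2.2 (Equiv.Perm.inv_eq_iff_eq.2 h.symm))
  have hi : i = a (Equiv.swap j k (b (c k))) := by simpa [hck] using congr($heq k)
  by_cases hk : b (c k) = k
  · rw [hk, Equiv.swap_apply_right] at hi
    exact (hsep a⁻¹ (inv_mem ha)).1 (Equiv.Perm.inv_eq_iff_eq.2 hi)
  · have hj : b (c k) ≠ j := fun h ↦
      (hsep (b * c)⁻¹ (inv_mem (mul_mem hb hc))).2.2 (Equiv.Perm.inv_eq_iff_eq.2 h.symm)
    rw [Equiv.swap_apply_of_ne_of_ne hj hk] at hi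
    exact (hsep (a * b * c)⁻¹ (inv_mem (mul_mem (mul_mem ha hb) hc))).2.1
      (Equiv.Perm.inv_eq_iff_eq.2 hi)

section Pairs

variable {α : Type}

variable (α) in
/-- The action of the symmetric group on functions of unordered pairs, diagonal pairs included. -/
noncomputable def pairRep : Representation ℂ (Equiv.Perm α) (Sym2 α → ℂ) where
  toFun g := LinearMap.funLeft ℂ ℂ (Sym2.map ⇑g⁻¹)
  map_one' := by ext; simp [LinearMap.funLeft]
  map_mul' g h := by ext; simp [LinearMap.funLeft, Sym2.map_map]

theorem pairRep_apply (g : Equiv.Perm α) (f : Sym2 α → ℂ) (e : Sym2 α) :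
    pairRep α g f e = f (e.map ⇑g⁻¹) := rfl

variable [Fintype α]

variable (α) in
/-- Edge functions on the complete graph whose values around every vertex sum to zero. If `α` has
`n ≥ 4` elements, this is the Specht module of shape `(n - 2, 2)`. -/
noncomputable def edgeSpace : Subrepresentation (pairRep α) where
  toSubmodule :=
    { carrier := {f | (∀ i, f s(i, i) = 0) ∧ ∀ i, ∑ j, f s(i, j) = 0}
      add_mem' hf hg := ⟨fun i ↦ by simp [hf.1, hg.1],
        fun i ↦ by simp [Finset.sum_add_distrib, hf.2, hg.2]⟩
      zero_mem' := by simp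
      smul_mem' c f hf := ⟨fun i ↦ by simp [hf.1], fun i ↦ by simp [← Finset.mul_sum, hf.2]⟩ }
  apply_mem_toSubmodule g f hf := by
    refine ⟨fun i ↦ hf.1 _, fun i ↦ ?_⟩
    rw [← hf.2 (g⁻¹ i)]
    exact Fintype.sum_equiv g⁻¹ _ _ fun j ↦ rfl

theorem eq_zero_of_sum_eq_zero_of_const_off {f : α → ℂ} {s : Set α} (hs : ∀ i ∈ s, f i = 0)
    (hconst : ∀ i ∉ s, ∀ j ∉ s, f i = f j) (hsum : ∑ i, f i = 0) : f = 0 := by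
  classical
  funext i
  by_cases hi : i ∈ s
  · exact hs i hi
  have hf (j : α) : f j = if j ∈ s then 0 else f i := by
    split_ifs with hj
    · exact hs j hj
    · exact hconst j hj i hi
  rw [Fintype.sum_congr _ _ hf, Finset.sum_ite, Finset.sum_const_zero, Finset.sum_const, zero_add,
    smul_eq_zero, Finset.card_eq_zero] at hsum
  exact hsum.resolve_left (Finset.ne_empty_of_mem (Finset.mem_filter.2 ⟨Finset.mem_univ i, hi⟩))

theorem eq_zero_of_mem_edgeSpace_of_apply_eq_zero {f : Sym2 α → ℂ} (hf : f ∈ edgeSpace α) {i j : α}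
    (hinv : ∀ g ∈ fixingSubgroup (Equiv.Perm α) ({i, j} : Set α), pairRep α g f = f)
    (hij : f s(i, j) = 0) : f = 0 := by
  classical
  have row (k : α) (hk : ∀ l ∈ ({i, j, k} : Set α), f s(k, l) = 0) (l : α) : f s(k, l) = 0 := by
    refine congr_fun (eq_zero_of_sum_eq_zero_of_const_off hk (fun a ha b hb ↦ ?_) (hf.2 k)) l
    simp only [Set.mem_insert_iff, Set.mem_singleton_iff, not_or] at ha hb
    have hswap : Equiv.swap a b ∈ fixingSubgroup (Equiv.Perm α) ({i, j} : Set α) := by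
      rw [mem_fixingSubgroup_iff]
      rintro c (rfl | rfl)
      · exact Equiv.swap_apply_of_ne_of_ne (Ne.symm ha.1) (Ne.symm hb.1)
      · exact Equiv.swap_apply_of_ne_of_ne (Ne.symm ha.2.1) (Ne.symm hb.2.1)
    have := congr($(hinv _ hswap) s(k, a))
    rwa [pairRep_apply, Sym2.map_mk, Equiv.swap_inv, Equiv.swap_apply_left,
      Equiv.swap_apply_of_ne_of_ne (Ne.symm ha.2.2) (Ne.symm hb.2.2), eq_comm] at this
  have row_i : ∀ l, f s(i, l) = 0 := row i (by simp [hij, hf.1 i])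
  have row_j : ∀ l, f s(j, l) = 0 := row j (by simp [Sym2.eq_swap (a := j), row_i, hf.1 j])
  funext e
  induction e with | _ k l
  exact row k (by simp [Sym2.eq_swap (a := k), row_i, row_j, hf.1 k]) l

theorem isIrreducible_edgeSpace [Nontrivial (edgeSpace α).toSubmodule] :
    (edgeSpace α).toRepresentation.IsIrreducible := by
  have exists_pair (v : (edgeSpace α).toSubmodule) (hv : v ≠ 0) :
      ∃ i j, i ≠ j ∧ (v : Sym2 α → ℂ) s(i, j) ≠ 0 := by
    by_contra! h
    refine hv (Subtype.ext (funext fun e ↦ ?_))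
    induction e with | _ i j
    by_cases hij : i = j
    · exact hij ▸ v.2.1 i
    · exact h i j hij
  obtain ⟨v, hv⟩ := exists_ne (0 : (edgeSpace α).toSubmodule)
  obtain ⟨i, j, hij, -⟩ := exists_pair v hv
  let H := fixingSubgroup (Equiv.Perm α) ({i, j} : Set α)
  have := Fintype.ofFinite H
  refine isIrreducible_of_forall_exists_apply_ne_zero (H := H) _
    (l := LinearMap.proj s(i, j) ∘ₗ (edgeSpace α).toSubmodule.subtype) (fun h hh ↦ ?_)
    (fun w hw ↦ ?_) (fun w hw hw0 ↦ ?_)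
  · have hinv (k : α) (hk : k ∈ ({i, j} : Set α)) : h⁻¹ k = k :=
      (mem_fixingSubgroup_iff _).1 (inv_mem hh) k hk
    ext w
    change (w : Sym2 α → ℂ) s(h⁻¹ i, h⁻¹ j) = (w : Sym2 α → ℂ) s(i, j)
    rw [hinv i (by simp), hinv j (by simp)]
  · obtain ⟨k, l, hkl, hwkl⟩ := exists_pair w hw
    obtain ⟨g, hgi, hgj⟩ := MulAction.is_two_pretransitive_iff.1
      (Equiv.Perm.isMultiplyPretransitive α 2) hij hkl
    refine ⟨g⁻¹, ?_⟩
    change (w : Sym2 α → ℂ) s(g⁻¹⁻¹ i, g⁻¹⁻¹ j) ≠ 0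
    rw [inv_inv]
    rwa [← hgi, ← hgj] at hwkl
  · exact Subtype.ext (eq_zero_of_mem_edgeSpace_of_apply_eq_zero w.2
      (fun g hg ↦ congr(Subtype.val $(hw ⟨g, hg⟩))) hw0)

theorem IsMultFree.finrank_invariants_edgeSpace_le_one {H : Subgroup (Equiv.Perm α)}
    (hH : IsMultFree H) : Module.finrank ℂ
      (Representation.invariants ((edgeSpace α).toRepresentation.comp H.subtype)) ≤ 1 := by
  rcases subsingleton_or_nontrivial (edgeSpace α).toSubmodule with _ | _
  · simp [Module.finrank_zero_of_subsingleton]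
  · have := isIrreducible_edgeSpace (α := α)
    exact hH (FDRep.of (edgeSpace α).toRepresentation) (simple_of_isIrreducible _)

end Pairs

section EdgeOrbits

variable {α : Type}

/-- The edge functions on the complete graph that are invariant under `H`. Their space has
dimension the number of `H`-orbits of edges. -/
noncomputable def edgeInvariants (H : Subgroup (Equiv.Perm α)) : Submodule ℂ (Sym2 α → ℂ) where
  carrier := {f | (∀ i, f s(i, i) = 0) ∧ ∀ h ∈ H, ∀ e : Sym2 α, f (e.map h) = f e}
  add_mem' hf hg :=
    ⟨fun i ↦ by simp [hf.1, hg.1], fun h hh e ↦ by simp [hf.2 h hh, hg.2 h hh]⟩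
  zero_mem' := by simp
  smul_mem' c f hf := ⟨fun i ↦ by simp [hf.1], fun h hh e ↦ by simp [hf.2 h hh]⟩

variable [Finite α]

theorem length_le_finrank_edgeInvariants {H : Subgroup (Equiv.Perm α)} {T : List (Sym2 α)}
    (hT : ∀ e ∈ T, ¬ e.IsDiag) (hsep : T.Pairwise fun e e' ↦ ∀ h ∈ H, e.map h ≠ e') :
    T.length ≤ Module.finrank ℂ (edgeInvariants H) := by
  classical
  let u (t : Fin T.length) : edgeInvariants H :=
    ⟨fun e ↦ if ∃ h ∈ H, T[t].map ⇑h = e then 1 else 0, by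
      refine ⟨fun i ↦ if_neg ?_, fun h hh e ↦ ?_⟩
      · rintro ⟨h, -, he⟩
        exact hT _ (List.getElem_mem t.2)
          ((Sym2.isDiag_map h.injective).1 (he ▸ Sym2.diag_isDiag i))
      · refine if_congr ⟨?_, ?_⟩ rfl rfl
        · rintro ⟨k, hk, he⟩
          refine ⟨h⁻¹ * k, mul_mem (inv_mem hh) hk, ?_⟩
          rw [Equiv.Perm.coe_mul, ← Sym2.map_map, he]
          simp [Sym2.map_map]
        · rintro ⟨k, hk, rfl⟩
          exact ⟨h * k, mul_mem hh hk, by simp [Sym2.map_map]⟩⟩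
  have u_apply (s t : Fin T.length) : (u t : Sym2 α → ℂ) T[s] = if t = s then 1 else 0 := by
    refine if_congr ⟨fun ⟨h, hh, he⟩ ↦ ?_, ?_⟩ rfl rfl
    · rcases lt_trichotomy t s with hts | hts | hts
      · exact absurd he (List.pairwise_iff_get.1 hsep t s hts h hh)
      · exact hts
      · refine absurd ?_ (List.pairwise_iff_get.1 hsep s t hts h⁻¹ (inv_mem hh))
        exact congr(($he).map ⇑h⁻¹).symm.trans (by simp [Sym2.map_map])
    · rintro rfl
      exact ⟨1, one_mem H, by simp⟩
  have hli : LinearIndependent ℂ u := by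
    refine Fintype.linearIndependent_iff.2 fun c hc s ↦ ?_
    have := congr(($hc : Sym2 α → ℂ) T[s])
    simpa [-Fin.getElem_fin, u_apply] using this
  simpa using hli.fintype_card_le_finrank

theorem IsMultFree.finrank_edgeInvariants_le {H : Subgroup (Equiv.Perm α)} (hH : IsMultFree H)
    {R : List α} (hR : ∀ i, ∃ r ∈ R, ∃ h ∈ H, h r = i) :
    Module.finrank ℂ (edgeInvariants H) ≤ R.length + 1 := by
  have := Fintype.ofFinite α
  let row : edgeInvariants H →ₗ[ℂ] Fin R.length → ℂ :=
    { toFun f r := ∑ j, (f : Sym2 α → ℂ) s(R[r], j)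
      map_add' f g := by ext; simp [Finset.sum_add_distrib]
      map_smul' c f := by ext; simp [Finset.mul_sum] }
  have mem_edgeSpace (f : LinearMap.ker row) : (f : Sym2 α → ℂ) ∈ edgeSpace α := by
    obtain ⟨⟨f, hdiag, hinv⟩, hf⟩ := f
    refine ⟨hdiag, fun i ↦ ?_⟩
    obtain ⟨r, hr, h, hh, rfl⟩ := hR i
    obtain ⟨t, rfl⟩ := List.get_of_mem hr
    refine Eq.trans ?_ congr($(LinearMap.mem_ker.1 hf) t)
    exact (Fintype.sum_equiv h _ _ fun j ↦ (hinv h hh s(_, j)).symm).symm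
  let ι : LinearMap.ker row →ₗ[ℂ]
      Representation.invariants ((edgeSpace α).toRepresentation.comp H.subtype) :=
    { toFun f := ⟨⟨f, mem_edgeSpace f⟩, fun h ↦
        Subtype.ext (funext fun e ↦ f.1.2.2 _ (inv_mem h.2) e)⟩
      map_add' _ _ := rfl
      map_smul' _ _ := rfl }
  have hι : Function.Injective ι := fun f g hfg ↦
    Subtype.ext (Subtype.ext congr((($hfg : (edgeSpace α).toSubmodule) : Sym2 α → ℂ)))
  have hker := (LinearMap.finrank_le_finrank_of_injective hι).trans
    hH.finrank_invariants_edgeSpace_le_one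
  have hrange : Module.finrank ℂ (LinearMap.range row) ≤ R.length := by
    simpa using Submodule.finrank_le (LinearMap.range row)
  have := row.finrank_range_add_finrank_ker
  lia

theorem IsMultFree.length_le {H : Subgroup (Equiv.Perm α)} (hH : IsMultFree H) {R : List α}
    (hR : ∀ i, ∃ r ∈ R, ∃ h ∈ H, h r = i) {T : List (Sym2 α)} (hT : ∀ e ∈ T, ¬ e.IsDiag)
    (hsep : T.Pairwise fun e e' ↦ ∀ h ∈ H, e.map h ≠ e') : T.length ≤ R.length + 1 :=
  (length_le_finrank_edgeInvariants hT hsep).trans (hH.finrank_edgeInvariants_le hR)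

end EdgeOrbits

section Coordinates

variable {ι α : Type*} {x y : Equiv.Perm α} {f : ι ↪ α} {c d : Equiv.Perm ι}

theorem apply_mem_range_iff (hx : ∀ i, x (f i) = f (c i)) (a : α) :
    x a ∈ Set.range f ↔ a ∈ Set.range f := by
  constructor
  · rintro ⟨i, hi⟩
    exact ⟨c⁻¹ i, x.injective (by simp [hx, hi])⟩
  · rintro ⟨i, rfl⟩
    exact ⟨c i, (hx i).symm⟩

theorem semiconjBy_viaEmbedding_of_eq_off_range {k : Equiv.Perm ι} (hk : SemiconjBy k c d)
    (hx : ∀ i, x (f i) = f (c i)) (hy : ∀ i, y (f i) = f (d i))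
    (hxy : ∀ a ∉ Set.range f, x a = y a) : SemiconjBy (k.viaEmbedding f) x y := by
  refine Equiv.ext fun a ↦ ?_
  rw [Equiv.Perm.mul_apply, Equiv.Perm.mul_apply]
  by_cases ha : a ∈ Set.range f
  · obtain ⟨i, rfl⟩ := ha
    rw [hx, k.viaEmbedding_apply, k.viaEmbedding_apply, hy]
    exact congr(f ($hk i))
  · have hxa : x a ∉ Set.range f := mt (apply_mem_range_iff hx a).1 ha
    rw [k.viaEmbedding_apply_of_notMem f _ hxa, k.viaEmbedding_apply_of_notMem f _ ha, hxy a ha]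

theorem exists_isConj_of_isConj_on_range (hx : ∀ i, x (f i) = f (c i)) (hcd : IsConj c d) :
    ∃ y, IsConj x y ∧ (∀ i, y (f i) = f (d i)) ∧ ∀ a ∉ Set.range f, x a = y a := by
  obtain ⟨k, hk⟩ := hcd
  have hy (i : ι) : ((d * c⁻¹).viaEmbedding f * x) (f i) = f (d i) := by
    rw [Equiv.Perm.mul_apply, hx, Equiv.Perm.viaEmbedding_apply]
    simp
  have hxy (a : α) (ha : a ∉ Set.range f) : x a = ((d * c⁻¹).viaEmbedding f * x) a :=
    (Equiv.Perm.viaEmbedding_apply_of_notMem _ f _ (mt (apply_mem_range_iff hx a).1 ha)).symm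
  exact ⟨_, isConj_iff.2 ⟨_, mul_inv_eq_iff_eq_mul.2
    (semiconjBy_viaEmbedding_of_eq_off_range hk hx hy hxy)⟩, hy, hxy⟩

theorem commute_of_eq_off_range (hcd : Commute c d) (hx : ∀ i, x (f i) = f (c i))
    (hy : ∀ i, y (f i) = f (d i)) (hxy : ∀ a ∉ Set.range f, x a = y a) : Commute x y := by
  refine Equiv.ext fun a ↦ ?_
  rw [Equiv.Perm.mul_apply, Equiv.Perm.mul_apply]
  by_cases ha : a ∈ Set.range f
  · obtain ⟨i, rfl⟩ := ha
    rw [hy, hx, hx, hy]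
    exact congr(f ($hcd i))
  · rw [← hxy a ha, hxy _ (mt (apply_mem_range_iff hx a).1 ha)]

end Coordinates

section Period

variable {α : Type*} {x : Equiv.Perm α} {i j : α}

theorem pow_apply_eq_self_iff {k : ℕ} :
    (x ^ k) i = i ↔ Function.minimalPeriod x i ∣ k :=
  MulAction.pow_smul_eq_iff_minimalPeriod_dvd (a := x) (b := i)

theorem zpow_apply_eq_self_iff {k : ℤ} :
    (x ^ k) i = i ↔ (Function.minimalPeriod x i : ℤ) ∣ k :=
  MulAction.zpow_smul_eq_iff_minimalPeriod_dvd (a := x) (b := i)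

theorem minimalPeriod_apply_of_commute {h : Equiv.Perm α} (hh : Commute h x) (i : α) :
    Function.minimalPeriod x (h i) = Function.minimalPeriod x i := by
  have key (k : ℕ) : (x ^ k) (h i) = h i ↔ (x ^ k) i = i := by
    rw [← h.apply_eq_iff_eq (x := (x ^ k) i)]
    exact Eq.congr_left congr($(((hh.pow_right k).eq).symm) i)
  refine Nat.dvd_antisymm ?_ ?_
  · rw [← pow_apply_eq_self_iff, key, pow_apply_eq_self_iff]
  · rw [← pow_apply_eq_self_iff, ← key, pow_apply_eq_self_iff]

theorem exists_cycle_coordinates {ι : Type*} {m : ℕ} {p : ι → α}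
    (hm : ∀ i, Function.minimalPeriod x (p i) = m) (hp : ∀ i j, x.SameCycle (p i) (p j) → i = j) :
    ∃ f : ι × ZMod m ↪ α, (∀ i, f (i, 0) = p i) ∧ ∀ i k, x (f (i, k)) = f (i, k + 1) := by
  have key (i : ι) (a b : ℤ) : (x ^ a) (p i) = (x ^ b) (p i) ↔ (a : ZMod m) = b := by
    rw [ZMod.intCast_eq_intCast_iff_dvd_sub, ← hm i, ← zpow_apply_eq_self_iff, sub_eq_neg_add,
      zpow_add, Equiv.Perm.mul_apply, zpow_neg, Equiv.Perm.inv_eq_iff_eq, eq_comm]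
  let f (q : ι × ZMod m) : α := (x ^ (q.2.cast : ℤ)) (p q.1)
  have hf : Function.Injective f := by
    rintro ⟨i, a⟩ ⟨j, b⟩ hab
    have hij : x.SameCycle (f (i, a)) (f (j, b)) := hab ▸ Equiv.Perm.SameCycle.refl x _
    obtain rfl : i = j :=
      hp i j (Equiv.Perm.sameCycle_zpow_left.1 (Equiv.Perm.sameCycle_zpow_right.1 hij))
    exact Prod.ext rfl (by simpa using (key i _ _).1 hab)
  refine ⟨⟨f, hf⟩, fun i ↦ by simp [f], fun i k ↦ ?_⟩
  change x ((x ^ _) (p i)) = _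
  rw [← Equiv.Perm.mul_apply, ← zpow_one_add]
  exact (key i _ _).2 (by simp [add_comm])

theorem exists_commute_apply_eq (h : Function.minimalPeriod x i = Function.minimalPeriod x j) :
    ∃ σ : Equiv.Perm α, Commute σ x ∧ σ i = j := by
  by_cases hij : x.SameCycle i j
  · obtain ⟨k, hk⟩ := hij
    exact ⟨x ^ k, (Commute.refl x).zpow_left k, hk⟩
  obtain ⟨f, hf, hx⟩ := exists_cycle_coordinates (x := x) (p := fun t : Bool ↦ if t then i else j)
    (m := Function.minimalPeriod x j) (by simp [h])
    (by simp [hij, mt Equiv.Perm.SameCycle.symm hij])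
  let c : Equiv.Perm (Bool × ZMod (Function.minimalPeriod x j)) :=
    (Equiv.refl Bool).prodCongr (Equiv.addRight 1)
  let k : Equiv.Perm (Bool × ZMod (Function.minimalPeriod x j)) :=
    Equiv.boolNot.prodCongr (Equiv.refl _)
  have hkc : SemiconjBy k c c := Equiv.ext fun _ ↦ rfl
  have hxc (t) : x (f t) = f (c t) := hx t.1 t.2
  refine ⟨k.viaEmbedding f,
    semiconjBy_viaEmbedding_of_eq_off_range hkc hxc hxc fun _ _ ↦ rfl, ?_⟩
  calc k.viaEmbedding f i = k.viaEmbedding f (f (true, 0)) := by simp [hf]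
    _ = f (false, 0) := k.viaEmbedding_apply f _
    _ = j := by simp [hf]

end Period

section Reversal

variable {α : Type*} {x y x' y' : Equiv.Perm α}

/-- Two permutations have the same cycles up to the direction in which each of them is run through,
two-cycles and fixed points included. -/
def EqUpToReversal (x y : Equiv.Perm α) : Prop := ∀ a, x a = y a ∨ y (x a) = a

theorem EqUpToReversal.of_simulConj (h : EqUpToReversal x y) (hs : SimulConj x y x' y') :
    EqUpToReversal x' y' := by
  obtain ⟨g, hx, hy⟩ := hs
  have hx (a : α) : x' (g a) = g (x a) := congr($(hx.eq.symm) a)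
  have hy (a : α) : y' (g a) = g (y a) := congr($(hy.eq.symm) a)
  intro b
  obtain ⟨a, rfl⟩ := g.surjective b
  simpa only [hx, hy, g.apply_eq_iff_eq] using h a

theorem exists_commute_isConj_of_grid {m : ℕ} {f : ZMod m × ZMod m ↪ α}
    (hx₀ : ∀ b, x (f (0, b)) = f (0, b - 1)) (hx : ∀ a ≠ 0, ∀ b, x (f (a, b)) = f (a, b + 1)) :
    ∃ y z, IsConj x y ∧ IsConj y z ∧ Commute y z ∧ EqUpToReversal x y ∧
      ∀ a b, z (f (a, b)) = f (a + 1, b) := by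
  let c : Equiv.Perm (ZMod m × ZMod m) :=
    Equiv.prodShear (Equiv.refl _) fun a ↦ if a = 0 then Equiv.subRight 1 else Equiv.addRight 1
  let d : Equiv.Perm (ZMod m × ZMod m) := (Equiv.refl _).prodCongr (Equiv.addRight 1)
  let e : Equiv.Perm (ZMod m × ZMod m) := (Equiv.addRight 1).prodCongr (Equiv.refl _)
  have hxc (t) : x (f t) = f (c t) := by
    obtain ⟨a, b⟩ := t
    by_cases ha : a = 0
    · simpa [c, ha] using hx₀ b
    · simpa [c, ha] using hx a ha b
  have hcd : IsConj c d := by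
    refine isConj_iff.2 ⟨Equiv.prodShear (Equiv.refl _)
      fun a ↦ if a = 0 then Equiv.neg _ else Equiv.refl _, mul_inv_eq_iff_eq_mul.2 ?_⟩
    ext ⟨a, b⟩ <;> by_cases ha : a = 0 <;> simp [c, d, ha, add_comm, sub_eq_add_neg]
  have hde : IsConj d e :=
    isConj_iff.2 ⟨Equiv.prodComm _ _, mul_inv_eq_iff_eq_mul.2 (Equiv.ext fun _ ↦ rfl)⟩
  obtain ⟨y, hxy, hy, hxy_off⟩ := exists_isConj_of_isConj_on_range hxc hcd
  obtain ⟨z, hyz, hz, hyz_off⟩ := exists_isConj_of_isConj_on_range hy hde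
  refine ⟨y, z, hxy, hyz,
    commute_of_eq_off_range (c := d) (d := e) (Equiv.ext fun _ ↦ rfl) hy hz hyz_off,
    fun t ↦ ?_, fun a b ↦ hz (a, b)⟩
  by_cases ht : t ∈ Set.range f
  · obtain ⟨⟨a, b⟩, rfl⟩ := ht
    by_cases ha : a = 0
    · right; rw [ha, hx₀, hy]; simp [d]
    · left; rw [hx a ha, hy]; simp [d]
  · exact .inl (hxy_off t ht)

theorem exists_eqUpToReversal_of_fin_seven_coordinates {f : Fin 7 ↪ α}
    (hx : ∀ i, x (f i) = f ((c[0, 1, 2] * c[3, 4, 5] : Equiv.Perm (Fin 7)) i)) :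
    ∃ y, IsConj x y ∧
      (∀ i, y (f i) = f ((c[0, 2, 1] * c[3, 4, 5] : Equiv.Perm (Fin 7)) i)) ∧
      EqUpToReversal x y := by
  have hd : IsConj (c[0, 1, 2] * c[3, 4, 5] : Equiv.Perm (Fin 7)) (c[0, 2, 1] * c[3, 4, 5]) :=
    isConj_iff.2 ⟨c[1, 2], by decide⟩
  obtain ⟨y, hxy, hy, hxy_off⟩ := exists_isConj_of_isConj_on_range hx hd
  refine ⟨y, hxy, hy, fun a ↦ ?_⟩
  by_cases ha : a ∈ Set.range f
  · obtain ⟨i, rfl⟩ := ha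
    rw [hx, hy, hy, f.apply_eq_iff_eq, f.apply_eq_iff_eq]
    decide +revert
  · exact .inl (hxy_off a ha)

end Reversal

section Obstructions

variable {α : Type} [Finite α] {x : Equiv.Perm α}

/- The `y'` provided by multiplicity-freeness commutes with `x` and agrees up to reversal with the
column shift `z`, so it carries row `0`, which `x` runs through backwards, to a row that `x` runs
through forwards. -/
theorem not_isMultFree_centralizer_of_grid {m : ℕ} (hm : 3 ≤ m)
    {f : ZMod m × ZMod m ↪ α} (hx₀ : ∀ b, x (f (0, b)) = f (0, b - 1))
    (hx : ∀ a ≠ 0, ∀ b, x (f (a, b)) = f (a, b + 1)) :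
    ¬ IsMultFree (Subgroup.centralizer {x}) := by
  intro hH
  obtain ⟨y, z, hxy, hyz, hyz_comm, hrev, hz⟩ := exists_commute_isConj_of_grid hx₀ hx
  obtain ⟨y', ⟨g, hgy, hgz⟩, hs⟩ := hH.exists_simulConj hxy (hxy.trans hyz)
  have hrev : EqUpToReversal y' z := hrev.of_simulConj hs
  have hxy'_comm : Commute x y' := by
    rw [← mul_inv_eq_iff_eq_mul.2 hgy.eq, ← mul_inv_eq_iff_eq_mul.2 hgz.eq]
    exact hyz_comm.conj g
  have y'_apply (b : ZMod m) : ∃ a ≠ 0, y' (f (0, b)) = f (a, b) := by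
    have : Fact (1 < m) := ⟨by lia⟩
    rcases hrev (f (0, b)) with h | h
    · exact ⟨1, one_ne_zero, by rw [h, hz, zero_add]⟩
    · exact ⟨-1, neg_ne_zero.2 one_ne_zero, z.injective (by rw [h, hz, neg_add_cancel])⟩
  obtain ⟨a, ha, h0⟩ := y'_apply 0
  obtain ⟨a', -, h1⟩ := y'_apply (-1)
  have heq : f (a, 1) = f (a', -1) := by
    calc f (a, 1) = x (y' (f (0, 0))) := by rw [h0, hx a ha, zero_add]
      _ = y' (x (f (0, 0))) := congr($(hxy'_comm.eq) (f (0, 0)))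
      _ = f (a', -1) := by rw [hx₀, zero_sub, h1]
  have h2 : ((2 : ℕ) : ZMod m) = 0 := by
    have : (1 : ZMod m) = -1 := congr(($(f.injective heq)).2)
    rw [Nat.cast_two, ← one_add_one_eq_two, ← eq_neg_iff_add_eq_zero, ← this]
  exact absurd (Nat.le_of_dvd two_pos ((ZMod.natCast_eq_zero_iff 2 m).1 h2)) (by lia)

theorem not_isMultFree_centralizer_of_cycles {m : ℕ} (hm : 3 ≤ m) {p : ZMod m → α}
    (hper : ∀ i, Function.minimalPeriod x (p i) = m)
    (hp : ∀ i j, x.SameCycle (p i) (p j) → i = j) :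
    ¬ IsMultFree (Subgroup.centralizer {x}) := by
  obtain ⟨f, -, hx⟩ := exists_cycle_coordinates hper hp
  let r : Equiv.Perm (ZMod m × ZMod m) :=
    Equiv.prodShear (Equiv.refl _) fun a ↦ if a = 0 then Equiv.neg _ else Equiv.refl _
  refine not_isMultFree_centralizer_of_grid hm (f := r.toEmbedding.trans f) (fun b ↦ ?_)
    fun a ha b ↦ ?_
  · simp [r, hx, add_comm, sub_eq_add_neg]
  · simp [r, hx, ha]

theorem not_isMultFree_centralizer_of_fin_seven_coordinates {f : Fin 7 ↪ α}
    (hx : ∀ i, x (f i) = f ((c[0, 1, 2] * c[3, 4, 5] : Equiv.Perm (Fin 7)) i))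
    (hfix : ∀ a, x a = a → a = f 6) : ¬ IsMultFree (Subgroup.centralizer {x}) := by
  intro hH
  obtain ⟨y, hxy, hy, hrev⟩ := exists_eqUpToReversal_of_fin_seven_coordinates hx
  have he : IsConj (c[0, 1, 2] * c[3, 4, 5] : Equiv.Perm (Fin 7)) (c[1, 3, 6] * c[2, 4, 5]) :=
    isConj_iff.2 ⟨c[0, 1, 3, 2, 6], by decide⟩
  obtain ⟨z, hxz, hz, -⟩ := exists_isConj_of_isConj_on_range hx he
  obtain ⟨y', ⟨g, hgy, hgz⟩, hs⟩ := hH.exists_simulConj hxy hxz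
  have hrev : EqUpToReversal y' z := hrev.of_simulConj hs
  have hgy (a : α) : x (g a) = g (y a) := congr($(hgy.eq.symm) a)
  have hgz (a : α) : y' (g a) = g (z a) := congr($(hgz.eq.symm) a)
  have y6 : y (f 6) = f 6 := hy 6
  have g6 : g (f 6) = f 6 := hfix _ (by rw [hgy, y6])
  have y'_fixes : y' (x (y' (f 6))) = x (y' (f 6)) := by
    have h : x (y' (f 6)) = g (f 0) := by
      calc x (y' (f 6)) = g (y (z (f 6))) := by rw [← hgy, ← hgz, g6]
        _ = g (f 0) := by rw [hz, hy]; rfl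
    rw [h, hgz, hz]
    rfl
  have z_fixes : z (x (y' (f 6))) = x (y' (f 6)) := by
    rcases hrev (x (y' (f 6))) with h | h
    · rw [← h, y'_fixes]
    · rwa [y'_fixes] at h
  have z_moves (i : Fin 7) (hi : (c[1, 3, 6] * c[2, 4, 5] : Equiv.Perm (Fin 7)) i ≠ i) :
      z (f i) ≠ f i := by rwa [hz, Ne, f.apply_eq_iff_eq]
  rcases hrev (f 6) with h | h
  · rw [h, hz, hx] at z_fixes
    exact z_moves _ (by decide) z_fixes
  · have : y' (f 6) = f 3 := z.injective (h.trans (hz 3).symm)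
    rw [this, hx] at z_fixes
    exact z_moves _ (by decide) z_fixes

theorem not_isMultFree_centralizer_of_two_three_cycles {p : Fin 2 → α} {a : α}
    (hper : ∀ i, Function.minimalPeriod x (p i) = 3)
    (hp : ∀ i j, x.SameCycle (p i) (p j) → i = j) (ha : ∀ b, x b = b ↔ b = a) :
    ¬ IsMultFree (Subgroup.centralizer {x}) := by
  obtain ⟨f, -, hx⟩ := exists_cycle_coordinates hper hp
  have haf : a ∉ Set.range f := by
    rintro ⟨i, rfl⟩
    have h : i.2 + 1 = i.2 := congr(($(f.injective ((hx _ _).symm.trans ((ha _).2 rfl)))).2)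
    exact one_ne_zero (add_eq_left.1 h)
  let e : Fin 7 ↪ Option (Fin 2 × ZMod 3) :=
    ⟨![some (0, 0), some (0, 1), some (0, 2), some (1, 0), some (1, 1), some (1, 2), none],
      by decide⟩
  have he (i : Fin 7) : (e i).map (fun q ↦ (q.1, q.2 + 1)) =
      e ((c[0, 1, 2] * c[3, 4, 5] : Equiv.Perm (Fin 7)) i) := by
    decide +revert
  refine not_isMultFree_centralizer_of_fin_seven_coordinates
    (f := e.trans (f.optionElim a haf)) (fun i ↦ ?_) fun b hb ↦ (ha b).1 hb
  rw [Function.Embedding.trans_apply, Function.Embedding.trans_apply, ← he]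
  cases e i with
  | none => exact (ha a).2 rfl
  | some q => exact hx q.1 q.2

end Obstructions

section Pairs

variable {α : Type*} {x h : Equiv.Perm α} {i j k l : α}

/-- The unordered pairs of distinct points that lie in cycles of `x` of equal length. -/
def isoperiodicPairs (x : Equiv.Perm α) : Set (Sym2 α) :=
  {e | ¬ e.IsDiag ∧ ∀ i ∈ e, ∀ j ∈ e, Function.minimalPeriod x i = Function.minimalPeriod x j}

theorem mk_mem_isoperiodicPairs :
    s(i, j) ∈ isoperiodicPairs x ↔
      i ≠ j ∧ Function.minimalPeriod x i = Function.minimalPeriod x j := by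
  refine and_congr Sym2.mk_isDiag_iff.not ⟨fun h ↦ h i (by simp) j (by simp), fun h ↦ ?_⟩
  simp [h]

theorem sameCycle_apply_apply_of_commute (hh : Commute h x) :
    x.SameCycle (h i) (h j) ↔ x.SameCycle i j := by
  have key := Equiv.Perm.sameCycle_conj (f := x) (g := h) (x := h i) (y := h j)
  simpa [mul_inv_eq_iff_eq_mul.2 hh.eq] using key

theorem sameCycle_iff_of_map_eq (hh : Commute h x) (he : s(i, j).map h = s(k, l)) :
    x.SameCycle i j ↔ x.SameCycle k l := by
  rw [Sym2.map_mk, Sym2.eq_iff] at he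
  rcases he with ⟨rfl, rfl⟩ | ⟨rfl, rfl⟩
  · rw [sameCycle_apply_apply_of_commute hh]
  · rw [sameCycle_apply_apply_of_commute hh, Equiv.Perm.sameCycle_comm]

theorem minimalPeriod_eq_of_map_eq (hh : Commute h x) (he : s(i, j).map h = s(k, l))
    (hkl : s(k, l) ∈ isoperiodicPairs x) :
    Function.minimalPeriod x i = Function.minimalPeriod x k := by
  rw [← minimalPeriod_apply_of_commute hh]
  rw [Sym2.map_mk, Sym2.eq_iff] at he
  rcases he with ⟨rfl, -⟩ | ⟨rfl, -⟩
  · rfl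
  · exact (mk_mem_isoperiodicPairs.1 hkl).2.symm

theorem map_mk_pow_apply_ne {m k : ℕ} (hh : Commute h x) (hmk : m < k)
    (hk : m + k < Function.minimalPeriod x i) :
    s(i, (x ^ m) i).map h ≠ s(i, (x ^ k) i) := by
  have hne (n : ℕ) (hn : 0 < n) (hn' : n ≤ m + k) : (x ^ n) i ≠ i :=
    mt pow_apply_eq_self_iff.1 (Nat.not_dvd_of_pos_of_lt hn (hn'.trans_lt hk))
  have hm : h ((x ^ m) i) = (x ^ m) (h i) := congr($((hh.pow_right m).eq) i)
  rw [Sym2.map_mk, Ne, Sym2.eq_iff, hm]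
  rintro (⟨h₁, h₂⟩ | ⟨h₁, h₂⟩)
  · refine hne (k - m) (by lia) (by lia) ((x ^ m).injective ?_)
    rw [← Equiv.Perm.mul_apply, ← pow_add, Nat.add_sub_cancel' hmk.le, ← h₂, h₁]
  · refine hne (m + k) (by lia) le_rfl ?_
    rw [pow_add, Equiv.Perm.mul_apply, ← h₁, h₂]

theorem mk_pow_apply_mem_isoperiodicPairs {m : ℕ} (hm : 0 < m)
    (hm' : m < Function.minimalPeriod x i) : s(i, (x ^ m) i) ∈ isoperiodicPairs x :=
  mk_mem_isoperiodicPairs.2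
    ⟨fun h ↦ Nat.not_dvd_of_pos_of_lt hm hm' (pow_apply_eq_self_iff.1 h.symm),
      (minimalPeriod_apply_of_commute ((Commute.refl x).pow_left m) i).symm⟩

end Pairs

section Orbits

variable {α : Type} [Finite α] {x : Equiv.Perm α} {i j k l : α}

theorem IsMultFree.minimalPeriod_eq_or (hH : IsMultFree (Subgroup.centralizer {x})) (i j k : α) :
    Function.minimalPeriod x i = Function.minimalPeriod x j ∨
      Function.minimalPeriod x i = Function.minimalPeriod x k ∨
        Function.minimalPeriod x j = Function.minimalPeriod x k := by
  obtain ⟨h, hh, hijk⟩ := hH.exists_apply_eq i j k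
  have hh : Commute h x := Subgroup.mem_centralizer_singleton_iff.1 hh
  refine hijk.imp ?_ (Or.imp ?_ ?_) <;>
    exact fun e ↦ e ▸ (minimalPeriod_apply_of_commute hh _).symm

theorem IsMultFree.exists_map_eq (hH : IsMultFree (Subgroup.centralizer {x})) {e₁ e₂ e₃ : Sym2 α}
    (he₁ : e₁ ∈ isoperiodicPairs x) (he₂ : e₂ ∈ isoperiodicPairs x)
    (he₃ : e₃ ∈ isoperiodicPairs x) :
    ∃ h, Commute h x ∧ (e₁.map h = e₂ ∨ e₁.map h = e₃ ∨ e₂.map h = e₃) := by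
  by_contra! hsep
  have hT : ∀ e ∈ [e₁, e₂, e₃], e ∈ isoperiodicPairs x := by simp [he₁, he₂, he₃]
  have hsep : [e₁, e₂, e₃].Pairwise fun e e' ↦ ∀ h ∈ Subgroup.centralizer {x}, e.map h ≠ e' := by
    simp only [Subgroup.mem_centralizer_singleton_iff, List.pairwise_cons, List.forall_mem_cons]
    exact ⟨⟨fun h hh ↦ (hsep h hh).1, fun h hh ↦ (hsep h hh).2.1, by simp⟩,
      ⟨fun h hh ↦ (hsep h hh).2.2, by simp⟩, by simp⟩
  have hmem {i r : α} (hir : Function.minimalPeriod x i = Function.minimalPeriod x r) :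
      ∃ h ∈ Subgroup.centralizer {x}, h r = i := by
    obtain ⟨h, hh, hr⟩ := exists_commute_apply_eq hir.symm
    exact ⟨h, Subgroup.mem_centralizer_singleton_iff.2 hh, hr⟩
  by_cases hall : ∀ i j, Function.minimalPeriod x i = Function.minimalPeriod x j
  · have := hH.length_le (R := [e₁.out.1]) (fun i ↦ ⟨_, List.mem_singleton_self _, hmem (hall i _)⟩)
      (fun e he ↦ (hT e he).1) hsep
    simp at this
  · push Not at hall
    obtain ⟨r, s, hrs⟩ := hall
    have hcover (i : α) : ∃ t ∈ [r, s], ∃ h ∈ Subgroup.centralizer {x}, h t = i := by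
      rcases hH.minimalPeriod_eq_or i r s with hi | hi | hi
      · exact ⟨r, by simp, hmem hi⟩
      · exact ⟨s, by simp, hmem hi⟩
      · exact absurd hi hrs
    have hrs_sep (e) (he : e ∈ [e₁, e₂, e₃]) (h) (hh : h ∈ Subgroup.centralizer {x}) :
        s(r, s).map h ≠ e := by
      have hh : Commute h x := Subgroup.mem_centralizer_singleton_iff.1 hh
      rintro rfl
      refine hrs ?_
      rw [← minimalPeriod_apply_of_commute hh r, ← minimalPeriod_apply_of_commute hh s]
      exact (mk_mem_isoperiodicPairs.1 (hT _ he)).2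
    have hrs_diag : ¬ s(r, s).IsDiag := fun h ↦ hrs (congrArg _ (Sym2.mk_isDiag_iff.1 h))
    have := hH.length_le hcover (List.forall_mem_cons.2 ⟨hrs_diag, fun e he ↦ (hT e he).1⟩)
      (List.pairwise_cons.2 ⟨hrs_sep, hsep⟩)
    simp at this

theorem IsMultFree.sameCycle_of_four_le (hH : IsMultFree (Subgroup.centralizer {x}))
    (hi : 4 ≤ Function.minimalPeriod x i) (hkl : s(k, l) ∈ isoperiodicPairs x) :
    x.SameCycle k l ∧ Function.minimalPeriod x k = Function.minimalPeriod x i := by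
  obtain ⟨h, hh, h₁₂ | hkl'⟩ := hH.exists_map_eq
    (mk_pow_apply_mem_isoperiodicPairs (i := i) (m := 1) one_pos (by lia))
    (mk_pow_apply_mem_isoperiodicPairs (i := i) (m := 2) two_pos (by lia)) hkl
  · exact absurd h₁₂ (map_mk_pow_apply_ne hh one_lt_two (by lia))
  obtain ⟨m, hm⟩ : ∃ m : ℕ, s(i, (x ^ m) i).map h = s(k, l) := hkl'.elim (⟨1, ·⟩) (⟨2, ·⟩)
  exact ⟨(sameCycle_iff_of_map_eq hh hm).1 ⟨m, rfl⟩,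
    (minimalPeriod_eq_of_map_eq hh hm hkl).symm⟩

theorem IsMultFree.minimalPeriod_lt_six (hH : IsMultFree (Subgroup.centralizer {x})) (i : α) :
    Function.minimalPeriod x i < 6 := by
  by_contra! hi
  obtain ⟨h, hh, h₁₂ | h₁₃ | h₂₃⟩ := hH.exists_map_eq
    (mk_pow_apply_mem_isoperiodicPairs (i := i) (m := 1) one_pos (by lia))
    (mk_pow_apply_mem_isoperiodicPairs (i := i) (m := 2) two_pos (by lia))
    (mk_pow_apply_mem_isoperiodicPairs (i := i) (m := 3) three_pos (by lia))
  · exact map_mk_pow_apply_ne hh (by lia) (by lia) h₁₂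
  · exact map_mk_pow_apply_ne hh (by lia) (by lia) h₁₃
  · exact map_mk_pow_apply_ne hh (by lia) (by lia) h₂₃

theorem IsMultFree.minimalPeriod_eq_of_not_sameCycle
    (hH : IsMultFree (Subgroup.centralizer {x})) (hi : x i ≠ i) (hij : ¬ x.SameCycle i j)
    (hper : Function.minimalPeriod x i = Function.minimalPeriod x j)
    (hkl : s(k, l) ∈ isoperiodicPairs x) :
    Function.minimalPeriod x k = Function.minimalPeriod x i := by
  obtain ⟨h, hh, h₁₂ | hkl'⟩ := hH.exists_map_eq (e₁ := s(i, x i)) (e₂ := s(i, j))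
    (mk_mem_isoperiodicPairs.2
      ⟨hi.symm, (minimalPeriod_apply_of_commute (Commute.refl x) i).symm⟩)
    (mk_mem_isoperiodicPairs.2 ⟨fun h ↦ hij (h ▸ .refl x i), hper⟩) hkl
  · exact absurd ((sameCycle_iff_of_map_eq hh h₁₂).1 ⟨1, rfl⟩) hij
  · exact (hkl'.elim (minimalPeriod_eq_of_map_eq hh · hkl)
      (minimalPeriod_eq_of_map_eq hh · hkl)).symm

end Orbits

section CycleType

variable {α : Type*} [Fintype α] {x : Equiv.Perm α} {i j : α}

theorem card_le_sum_minimalPeriod {ι : Type*} [Fintype ι] {p : ι → α}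
    (hp : ∀ j, ∃ a, x.SameCycle (p a) j) :
    Fintype.card α ≤ ∑ a, Function.minimalPeriod x (p a) := by
  classical
  calc Fintype.card α
      ≤ (Finset.univ.biUnion fun a ↦ (Finset.range (Function.minimalPeriod x (p a))).image
          fun k ↦ (x ^ k) (p a)).card := by
        refine Finset.card_le_card fun j _ ↦ Finset.mem_biUnion.2 ?_
        obtain ⟨a, ha⟩ := hp j
        obtain ⟨k, -, -, rfl⟩ := ha.exists_pow_eq''
        refine ⟨a, Finset.mem_univ a,
          Finset.mem_image.2 ⟨k % Function.minimalPeriod x (p a), ?_, ?_⟩⟩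
        · exact Finset.mem_range.2 (Nat.mod_lt _ (Function.minimalPeriod_pos_of_mem_periodicPts
            (x.injective.mem_periodicPts _)))
        · rw [← Equiv.Perm.iterate_eq_pow, Function.iterate_mod_minimalPeriod_eq,
            Equiv.Perm.iterate_eq_pow]
    _ ≤ ∑ a, Function.minimalPeriod x (p a) :=
        Finset.card_biUnion_le.trans (Finset.sum_le_sum fun a _ ↦
          Finset.card_image_le.trans (Finset.card_range _).le)

theorem exists_not_sameCycle (h : Function.minimalPeriod x i < Fintype.card α) :
    ∃ j, ¬ x.SameCycle i j := by
  by_contra! hi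
  have := card_le_sum_minimalPeriod (p := fun _ : Unit ↦ i) fun j ↦ ⟨(), hi j⟩
  exact h.not_ge (by simpa using this)

theorem exists_not_sameCycle_and_not_sameCycle
    (h : Function.minimalPeriod x i + Function.minimalPeriod x j < Fintype.card α) :
    ∃ k, ¬ x.SameCycle i k ∧ ¬ x.SameCycle j k := by
  by_contra! hij
  have := card_le_sum_minimalPeriod (x := x) (p := ![i, j]) fun k ↦ by
    by_cases hk : x.SameCycle i k
    · exact ⟨0, hk⟩
    · exact ⟨1, hij k hk⟩
  exact h.not_ge (by simpa [Fin.sum_univ_two] using this)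

theorem cycleType_eq_singleton_minimalPeriod [DecidableEq α] (hi : x i ≠ i)
    (h : ∀ j, x j ≠ j → x.SameCycle i j) : x.cycleType = {Function.minimalPeriod x i} := by
  have hx : x.IsCycle := ⟨i, hi, h⟩
  rw [hx.cycleType, ← hx.orderOf]
  congr 1
  refine Nat.dvd_antisymm ?_ ?_
  · exact orderOf_dvd_of_pow_eq_one
      (hx.pow_eq_one_iff.2 ⟨i, hi, pow_apply_eq_self_iff.2 dvd_rfl⟩)
  · exact pow_apply_eq_self_iff.1 (by rw [pow_orderOf_eq_one, Equiv.Perm.one_apply])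

theorem cycleType_eq_replicate_two [DecidableEq α] (hx : x * x = 1) :
    x.cycleType = Multiset.replicate x.cycleType.card 2 := by
  refine Multiset.eq_replicate_card.2 fun n hn ↦ ?_
  have hn2 : n ∣ 2 :=
    (Equiv.Perm.dvd_of_mem_cycleType hn).trans (orderOf_dvd_of_pow_eq_one (by rwa [sq]))
  exact (Nat.le_of_dvd two_pos hn2).antisymm (Equiv.Perm.two_le_of_mem_cycleType hn)

end CycleType

section Necessity

variable {α : Type} [Fintype α] {x : Equiv.Perm α} {i j : α}

theorem IsMultFree.minimalPeriod_le_three (hα : 7 ≤ Fintype.card α)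
    (hH : IsMultFree (Subgroup.centralizer {x})) (i : α) : Function.minimalPeriod x i ≤ 3 := by
  by_contra! hi
  have hi6 := hH.minimalPeriod_lt_six i
  obtain ⟨j, hij⟩ := exists_not_sameCycle (x := x) (i := i) (by lia)
  have key {k l : α} (hkl : k ≠ l)
      (hper : Function.minimalPeriod x k = Function.minimalPeriod x l) :=
    hH.sameCycle_of_four_le hi (mk_mem_isoperiodicPairs.2 ⟨hkl, hper⟩)
  have hne {k : α} (hk : ¬ x.SameCycle i k) :
      Function.minimalPeriod x i ≠ Function.minimalPeriod x k := by
    intro h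
    exact hk (key (by rintro rfl; exact hk (.refl x i)) h).1
  have hj : Function.minimalPeriod x j = 1 := by
    refine Function.minimalPeriod_eq_one_iff_isFixedPt.2 (by_contra fun hj ↦ hne hij ?_)
    have hxj := minimalPeriod_apply_of_commute (Commute.refl x) j
    exact (hxj.symm.trans (key hj hxj).2).symm
  obtain ⟨k, hik, hjk⟩ :=
    exists_not_sameCycle_and_not_sameCycle (x := x) (i := i) (j := j) (by lia)
  have hjk_per : Function.minimalPeriod x j = Function.minimalPeriod x k :=
    ((hH.minimalPeriod_eq_or i j k).resolve_left (hne hij)).resolve_left (hne hik)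
  exact hne hij (key (by rintro rfl; exact hjk (.refl x j)) hjk_per).2.symm

theorem IsMultFree.sameCycle_of_minimalPeriod_eq_three (hα : 7 ≤ Fintype.card α)
    (hH : IsMultFree (Subgroup.centralizer {x})) (hi : Function.minimalPeriod x i = 3)
    (hj : Function.minimalPeriod x j = 3) : x.SameCycle i j := by
  by_contra hij
  have hx : x i ≠ i := fun h ↦ by
    simp [Function.minimalPeriod_eq_one_iff_isFixedPt.2 h] at hi
  by_cases hk : ∃ k, Function.minimalPeriod x k = 3 ∧ ¬ x.SameCycle i k ∧ ¬ x.SameCycle j k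
  · obtain ⟨k, hk, hik, hjk⟩ := hk
    refine not_isMultFree_centralizer_of_cycles (m := 3) le_rfl (p := ![i, j, k])
      (Fin.forall_fin_succ.2 ⟨hi, Fin.forall_fin_two.2 ⟨hj, hk⟩⟩) (fun a b hab ↦ ?_) hH
    fin_cases a <;> fin_cases b <;>
      first | rfl | exact absurd hab ‹_› | exact absurd hab.symm ‹_›
  push Not at hk
  obtain ⟨k, hik, hjk⟩ :=
    exists_not_sameCycle_and_not_sameCycle (x := x) (i := i) (j := j) (by lia)
  have hk3 : Function.minimalPeriod x k ≠ 3 := fun h ↦ hjk (hk k h hik)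
  have huniq {a b : α} (hab : Function.minimalPeriod x a = Function.minimalPeriod x b)
      (ha : Function.minimalPeriod x a ≠ 3) : a = b := by
    by_contra hne
    exact ha ((hH.minimalPeriod_eq_of_not_sameCycle hx hij (hi.trans hj.symm)
      (mk_mem_isoperiodicPairs.2 ⟨hne, hab⟩)).trans hi)
  have hxk : x k = k := (huniq (minimalPeriod_apply_of_commute (Commute.refl x) k).symm hk3).symm
  refine not_isMultFree_centralizer_of_two_three_cycles (p := ![i, j]) (a := k)
    (Fin.forall_fin_two.2 ⟨hi, hj⟩) (fun a b hab ↦ ?_) (fun b ↦ ⟨fun hb ↦ ?_, ?_⟩) hH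
  · fin_cases a <;> fin_cases b <;>
      first | rfl | exact absurd hab ‹_› | exact absurd hab.symm ‹_›
  · have hb1 := Function.minimalPeriod_eq_one_iff_isFixedPt.2 hb
    have hk1 := Function.minimalPeriod_eq_one_iff_isFixedPt.2 hxk
    exact huniq (hb1.trans hk1.symm) (by simp [hb1])
  · rintro rfl
    exact hxk

theorem IsMultFree.apply_eq_of_minimalPeriod_eq_three (hα : 7 ≤ Fintype.card α)
    (hH : IsMultFree (Subgroup.centralizer {x})) (hi : Function.minimalPeriod x i = 3)
    (hij : ¬ x.SameCycle i j) : x j = j := by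
  by_contra hj
  have hne {k : α} (hk : ¬ x.SameCycle i k) :
      Function.minimalPeriod x i ≠ Function.minimalPeriod x k :=
    fun h ↦ hk (hH.sameCycle_of_minimalPeriod_eq_three hα hi (h.symm.trans hi))
  have hj3 := hH.minimalPeriod_le_three hα j
  have hji := hne hij
  obtain ⟨k, hik, hjk⟩ :=
    exists_not_sameCycle_and_not_sameCycle (x := x) (i := i) (j := j) (by lia)
  have hjk_per : Function.minimalPeriod x j = Function.minimalPeriod x k :=
    ((hH.minimalPeriod_eq_or i j k).resolve_left (hne hij)).resolve_left (hne hik)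
  refine hne hij (hH.minimalPeriod_eq_of_not_sameCycle hj hjk hjk_per
    (mk_pow_apply_mem_isoperiodicPairs (m := 1) one_pos (by lia)))

theorem IsMultFree.cycleType_of_mul_self_eq_one [DecidableEq α]
    (hH : IsMultFree (Subgroup.centralizer {x})) (hx : x ≠ 1) (hx2 : x * x = 1) :
    x.cycleType = {2} ∨ ∃ m, x.cycleType = Multiset.replicate m 2 ∧
      (Fintype.card α = 2 * m ∨ Fintype.card α = 2 * m + 1) := by
  have hper {i : α} (hi : x i ≠ i) : Function.minimalPeriod x i = 2 := by
    have h2 : Function.minimalPeriod x i ∣ 2 :=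
      pow_apply_eq_self_iff.1 (by rw [sq, hx2, Equiv.Perm.one_apply])
    exact ((Nat.dvd_prime Nat.prime_two).1 h2).resolve_left
      (mt Function.minimalPeriod_eq_one_iff_isFixedPt.1 hi)
  obtain ⟨i, hi⟩ := not_forall.1 (mt Equiv.ext hx)
  by_cases hj : ∀ j, x j ≠ j → x.SameCycle i j
  · exact .inl (by rw [cycleType_eq_singleton_minimalPeriod hi hj, hper hi])
  push Not at hj
  obtain ⟨j, hj, hij⟩ := hj
  have hfix {a b : α} (ha : x a = a) (hb : x b = b) : a = b := by
    by_contra hne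
    have ha1 := Function.minimalPeriod_eq_one_iff_isFixedPt.2 ha
    have := hH.minimalPeriod_eq_of_not_sameCycle hi hij ((hper hi).trans (hper hj).symm)
      (mk_mem_isoperiodicPairs.2 ⟨hne,
        ha1.trans (Function.minimalPeriod_eq_one_iff_isFixedPt.2 hb).symm⟩)
    rw [ha1, hper hi] at this
    contradiction
  have hcard := Equiv.Perm.sum_cycleType x
  rw [cycleType_eq_replicate_two hx2, Multiset.sum_replicate] at hcard
  have hcompl : x.supportᶜ.card ≤ 1 :=
    Finset.card_le_one.2 fun a ha b hb ↦ hfix (by simpa using ha) (by simpa using hb)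
  rw [Finset.card_compl] at hcompl
  refine .inr ⟨_, cycleType_eq_replicate_two hx2, ?_⟩
  have := x.support.card_le_univ
  rw [smul_eq_mul] at hcard
  lia

theorem IsMultFree.cycleType_of_seven_le_card [DecidableEq α] (hα : 7 ≤ Fintype.card α)
    (hH : IsMultFree (Subgroup.centralizer {x})) (hx : x ≠ 1) :
    x.cycleType = {2} ∨ x.cycleType = {3} ∨ ∃ m, x.cycleType = Multiset.replicate m 2 ∧
      (Fintype.card α = 2 * m ∨ Fintype.card α = 2 * m + 1) := by
  by_cases h3 : ∃ i, Function.minimalPeriod x i = 3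
  · obtain ⟨i, hi⟩ := h3
    have hxi : x i ≠ i := fun h ↦ by
      simp [Function.minimalPeriod_eq_one_iff_isFixedPt.2 h] at hi
    refine .inr (.inl ?_)
    rw [← hi]
    exact cycleType_eq_singleton_minimalPeriod hxi fun j hj ↦
      by_contra fun hij ↦ hj (hH.apply_eq_of_minimalPeriod_eq_three hα hi hij)
  · push Not at h3
    have hx2 : x * x = 1 := by
      refine Equiv.ext fun i ↦ ?_
      have hpos : 0 < Function.minimalPeriod x i :=
        Function.minimalPeriod_pos_of_mem_periodicPts (x.injective.mem_periodicPts i)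
      have := hH.minimalPeriod_le_three hα i
      have hi2 : Function.minimalPeriod x i ∣ 2 := by
        have := h3 i
        interval_cases Function.minimalPeriod x i <;> simp_all
      rw [← sq, pow_apply_eq_self_iff.2 hi2, Equiv.Perm.one_apply]
    exact (hH.cycleType_of_mul_self_eq_one hx hx2).imp_right .inr

end Necessity

theorem stmt1_general {α : Type} [Fintype α] [DecidableEq α] (hα : 7 ≤ Fintype.card α)
    (x : Equiv.Perm α) (hx : x ≠ 1) :
    IsMultFree (Subgroup.centralizer ({x} : Set (Equiv.Perm α))) ↔
      x.cycleType = {2} ∨ x.cycleType = {3} ∨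
        (∃ m, x.cycleType = Multiset.replicate m 2 ∧
          (Fintype.card α = 2 * m ∨ Fintype.card α = 2 * m + 1)) := by
  refine ⟨fun hH ↦ hH.cycleType_of_seven_le_card hα hx, ?_⟩
  rintro (h | h | ⟨m, h, hm⟩)
  · exact isMultFree_centralizer_of_cycleType_eq_two h
  · exact isMultFree_centralizer_of_cycleType_eq_three h
  · exact isMultFree_centralizer_of_cycleType_eq_replicate_two h (by lia)

theorem stmt1 (n : ℕ) (hn : 7 ≤ n) (x : Equiv.Perm (Fin n)) (hx : x ≠ 1) :
    IsMultFree (Subgroup.centralizer ({x} : Set (Equiv.Perm (Fin n)))) ↔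
      x.cycleType = {2} ∨ x.cycleType = {3} ∨
        (∃ m, x.cycleType = Multiset.replicate m 2 ∧ (n = 2 * m ∨ n = 2 * m + 1)) := by
  simpa using stmt1_general (by simpa using hn) x hx
end

section
/- Let k ≥ 10, regard S_{2k} as the subgroup of S_{2k+1} fixing the point 2k+1, and let W = S_k≀S_2 ≤ S_{2k} be the subgroup of permutations g of {1,…,2k} with g({1,…,k}) equal to {1,…,k} or to {k+1,…,2k}. Let ψ: W → {±1} be the homomorphism with ψ(g) = 1 if g({1,…,k}) = {1,…,k} and ψ(g) = −1 otherwise, and set Γ_k = {g ∈ W : sgn(g) = ψ(g)}. Then the permutation characters of S_{2k+1} on the cosets of each of the three subgroups W, A_{2k}∩W (the even permutations in W) and Γ_k are all multiplicity-free. -/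
/-- The subgroup of permutations preserving the partition of `α` into the fibres of a
colouring `c` (two points get mapped to the same fibre iff they lie in the same fibre). -/
def colorStab {α : Type*} {β : Sort*} (c : α → β) : Subgroup (Equiv.Perm α) where
  carrier := {g | ∀ i j : α, c i = c j ↔ c (g i) = c (g j)}
  one_mem' := by intro i j; simp
  mul_mem' := by
    intro a b ha hb i j
    simpa [Equiv.Perm.mul_apply] using (hb i j).trans (ha (b i) (b j))
  inv_mem' := by
    intro g hg i j
    simpa using (hg (g⁻¹ i) (g⁻¹ j)).symm

/-- The natural embedding of the symmetric group on `α` into the symmetric group on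
`Option α` (one extra point, which is fixed). -/
def optionHom (α : Type*) : Equiv.Perm α →* Equiv.Perm (Option α) where
  toFun e := e.optionCongr
  map_one' := by
    ext x
    cases x <;> simp
  map_mul' a b := by
    ext x
    cases x <;> simp [Equiv.Perm.mul_apply]

/-!
Gelfand's trick: if every double coset `H g H` is closed under inversion, then the Hecke operators
on `V^H` commute; for irreducible `V` they act cyclically on every nonzero vector, so `V^H` is at
most one-dimensional. Moreover `g⁻¹ ∈ H g H` as soon as `g H` contains an `s` with `s ^ 2 ∈ H`.

Colour the `2k + 1` points by the fixed point and the two blocks, and let `N` be the `3 × 3` matrix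
counting points by their colour and the colour of their preimage under `g`. Its margins `(1, k, k)`
force `N` to be symmetric, possibly after interchanging the two block colours in its columns, so
some permutation `s` exchanges the two colourings. Then `g⁻¹ s` lies in `W`, while `s ^ 2`, being an
even permutation that preserves each block, lies in all three subgroups. A wrong sign of `g⁻¹ s` is
repaired by multiplying `s` with a transposition of two points that agree in both colourings, which
the pigeonhole principle provides.
-/

section Representation

open CategoryTheory Representation

universe u v

theorem isIrreducible_of_simple_s7 {k : Type u} {G : Type v} [Field k] [Monoid G]
    (V : FDRep k G) [Simple V] : IsIrreducible (V.ρ : Representation k G V) where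
  exists_pair_ne := by
    refine ⟨⊥, ⊤, fun h ↦ id_nonzero V ?_⟩
    ext v
    have hv : (v : V) ∈ (⊥ : Subrepresentation (V.ρ : Representation k G V)) :=
      h ▸ Submodule.mem_top
    exact hv
  eq_bot_or_eq_top U := by
    let ι : FDRep.of U.toRepresentation ⟶ V :=
      { hom := FGModuleCat.ofHom U.toSubmodule.subtype
        comm := fun g ↦ by ext; rfl }
    have : Mono ι := ⟨fun a b hab ↦ by
      ext z
      exact congr(($hab).hom.hom z)⟩
    by_cases hι : ι = 0
    · refine Or.inl (Subrepresentation.toSubmodule_injective ((Submodule.eq_bot_iff _).2 ?_))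
      exact fun u hu ↦ congr(($hι).hom.hom ⟨u, hu⟩)
    · have := isIso_of_mono_of_nonzero hι
      refine Or.inr (Subrepresentation.toSubmodule_injective (Submodule.eq_top_iff'.2 fun v ↦ ?_))
      have hv : (inv ι ≫ ι).hom.hom v = v := congr(($(IsIso.inv_hom_id ι)).hom.hom v)
      exact hv ▸ ((inv ι).hom.hom v : U.toSubmodule).2

theorem span_orbit_eq_top {k G V : Type*} [Field k] [Monoid G] [AddCommGroup V] [Module k V]
    (ρ : Representation k G V) [IsIrreducible ρ] {v : V} (hv : v ≠ 0) :
    Submodule.span k (Set.range fun g ↦ ρ g v) = ⊤ := by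
  let U : Subrepresentation ρ :=
    { toSubmodule := Submodule.span k (Set.range fun g ↦ ρ g v)
      apply_mem_toSubmodule := fun g _ hu ↦ (Submodule.map_span_le _ _ _).2 (by
        rintro _ ⟨x, rfl⟩
        exact Submodule.subset_span ⟨g * x, by simp⟩) (Submodule.mem_map_of_mem hu) }
  have hvU : v ∈ U.toSubmodule := Submodule.subset_span ⟨1, by simp⟩
  rcases eq_bot_or_eq_top U with hU | hU
  · rw [hU] at hvU
    exact absurd hvU hv
  · exact congr(($hU).toSubmodule)

theorem finrank_le_one_of_commute {k W ι : Type*} [Field k] [IsAlgClosed k] [AddCommGroup W]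
    [Module k W] [FiniteDimensional k W] (T : ι → Module.End k W)
    (hcomm : ∀ i j, Commute (T i) (T j))
    (hcyclic : ∀ w ≠ 0, Submodule.span k (Set.range fun i ↦ T i w) = ⊤) :
    Module.finrank k W ≤ 1 := by
  rcases subsingleton_or_nontrivial W with _ | _
  · simp [Module.finrank_zero_of_subsingleton]
  let A := Algebra.adjoin k (Set.range T)
  have : IsMulCommutative A := Algebra.isMulCommutative_adjoin k (by
    rintro _ ⟨i, rfl⟩ _ ⟨j, rfl⟩
    exact hcomm i j)
  have : IsSimpleModule A W := by
    refine isSimpleModule_iff_toSpanSingleton_surjective.2 ⟨‹_›, fun w hw ↦ ?_⟩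
    have hle : Submodule.span k (Set.range fun i ↦ T i w) ≤
        ((LinearMap.toSpanSingleton A W w).restrictScalars k).range := Submodule.span_le.2 (by
      rintro _ ⟨i, rfl⟩
      exact ⟨⟨T i, Algebra.subset_adjoin ⟨i, rfl⟩⟩, rfl⟩)
    exact fun x ↦ hle (hcyclic w hw ▸ Submodule.mem_top)
  exact (IsSimpleModule.finrank_eq_one_of_isMulCommutative A W k).le

section Hecke

variable {k G V : Type*} [CommRing k] [Group G] [AddCommGroup V] [Module k V]

theorem averageMap_apply [Fintype G] [Invertible (Fintype.card G : k)]
    (ρ : Representation k G V) (v : V) :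
    averageMap ρ v = ⅟(Fintype.card G : k) • ∑ g, ρ g v := by
  simp [GroupAlgebra.average]

variable (ρ : Representation k G V) (H : Subgroup G) [Fintype H]
  [Invertible (Fintype.card H : k)]

/-- The Hecke operator of `g` on the `H`-invariants of `ρ`: apply `ρ g`, then average over `H`.
It depends only on the double coset `H g H`. -/
noncomputable def heckeOperator (g : G) : Module.End k (invariants (ρ.comp H.subtype)) :=
  (isProj_averageMap (ρ.comp H.subtype)).codRestrict ∘ₗ ρ g ∘ₗ Submodule.subtype _

variable {H}

theorem heckeOperator_apply (g : G) (w : invariants (ρ.comp H.subtype)) :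
    heckeOperator ρ H g w = (isProj_averageMap (ρ.comp H.subtype)).codRestrict (ρ g w) :=
  rfl

theorem coe_heckeOperator_apply (g : G) (w : invariants (ρ.comp H.subtype)) :
    (heckeOperator ρ H g w : V) = ⅟(Fintype.card H : k) • ∑ h : H, ρ (h * g) w := by
  simp only [map_mul, Module.End.mul_apply]
  exact averageMap_apply (ρ.comp H.subtype) (ρ g w)

theorem heckeOperator_mul_left {h : G} (hh : h ∈ H) (g : G) :
    heckeOperator ρ H (h * g) = heckeOperator ρ H g := by
  ext w
  rw [coe_heckeOperator_apply, coe_heckeOperator_apply]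
  congr 1
  exact Fintype.sum_equiv (Equiv.mulRight ⟨h, hh⟩) _ _ fun x ↦ by simp [mul_assoc]

theorem heckeOperator_mul_right (g : G) {h : G} (hh : h ∈ H) :
    heckeOperator ρ H (g * h) = heckeOperator ρ H g := by
  ext w
  have hw : ρ h w = w := w.2 ⟨h, hh⟩
  simp only [coe_heckeOperator_apply, map_mul, Module.End.mul_apply, hw]

theorem heckeOperator_eq_of_mem_doubleCoset {g g' : G}
    (hg : g' ∈ DoubleCoset.doubleCoset g (H : Set G) H) :
    heckeOperator ρ H g' = heckeOperator ρ H g := by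
  obtain ⟨h₁, hh₁, h₂, hh₂, rfl⟩ := DoubleCoset.mem_doubleCoset.1 hg
  rw [heckeOperator_mul_right ρ _ hh₂, heckeOperator_mul_left ρ hh₁]

theorem heckeOperator_mul (a b : G) :
    heckeOperator ρ H a * heckeOperator ρ H b =
      ⅟(Fintype.card H : k) • ∑ h : H, heckeOperator ρ H (a * h * b) := by
  refine LinearMap.ext fun w ↦ ?_
  rw [Module.End.mul_apply, heckeOperator_apply ρ a, coe_heckeOperator_apply]
  simp only [map_smul, map_sum, LinearMap.smul_apply, LinearMap.sum_apply, heckeOperator_apply,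
    ← Module.End.mul_apply, ← map_mul, mul_assoc]

theorem heckeOperator_commute
    (hsymm : ∀ g : G, g⁻¹ ∈ DoubleCoset.doubleCoset g (H : Set G) H) (a b : G) :
    Commute (heckeOperator ρ H a) (heckeOperator ρ H b) := by
  have hinv (g : G) : heckeOperator ρ H g⁻¹ = heckeOperator ρ H g :=
    heckeOperator_eq_of_mem_doubleCoset ρ (hsymm g)
  calc heckeOperator ρ H a * heckeOperator ρ H b
      = ⅟(Fintype.card H : k) • ∑ h : H, heckeOperator ρ H (a * h * b) := heckeOperator_mul ρ a b
    _ = ⅟(Fintype.card H : k) • ∑ h : H, heckeOperator ρ H (b⁻¹ * h * a⁻¹) := by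
      congr 1
      refine Fintype.sum_equiv (Equiv.inv H) _ _ fun h ↦ ?_
      rw [← hinv]
      simp [mul_assoc]
    _ = heckeOperator ρ H b⁻¹ * heckeOperator ρ H a⁻¹ := (heckeOperator_mul ρ b⁻¹ a⁻¹).symm
    _ = heckeOperator ρ H b * heckeOperator ρ H a := by rw [hinv, hinv]

end Hecke

section GelfandPair

variable {k G V : Type*} [Field k] [Group G] [AddCommGroup V] [Module k V]
  (ρ : Representation k G V) [IsIrreducible ρ] {H : Subgroup G} [Fintype H]
  [Invertible (Fintype.card H : k)]

theorem span_heckeOperator_apply_eq_top {w : invariants (ρ.comp H.subtype)}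
    (hw : w ≠ 0) : Submodule.span k (Set.range fun g ↦ heckeOperator ρ H g w) = ⊤ := by
  have hproj := isProj_averageMap (ρ.comp H.subtype)
  have hsurj : Function.Surjective hproj.codRestrict :=
    fun x ↦ ⟨x, hproj.codRestrict_apply_cod x⟩
  have hspan := congr(($(span_orbit_eq_top ρ (Subtype.coe_ne_coe.2 hw))).map hproj.codRestrict)
  rwa [Submodule.map_span, Submodule.map_top, LinearMap.range_eq_top.2 hsurj, ← Set.range_comp]
    at hspan

theorem finrank_invariants_le_one [IsAlgClosed k] [FiniteDimensional k V]
    (hsymm : ∀ g : G, g⁻¹ ∈ DoubleCoset.doubleCoset g (H : Set G) H) :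
    Module.finrank k (invariants (ρ.comp H.subtype)) ≤ 1 :=
  finrank_le_one_of_commute (heckeOperator ρ H) (heckeOperator_commute ρ hsymm)
    fun _ ↦ span_heckeOperator_apply_eq_top ρ

end GelfandPair

theorem isMultFree_of_inv_mem_doubleCoset_s7 {G : Type} [Group G] (H : Subgroup G) [Finite H]
    (hsymm : ∀ g : G, g⁻¹ ∈ DoubleCoset.doubleCoset g (H : Set G) H) : IsMultFree H := by
  intro V _
  have := Fintype.ofFinite H
  have : Invertible (Fintype.card H : ℂ) := invertibleOfNonzero (by simp)
  have := isIrreducible_of_simple_s7 V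
  exact finrank_invariants_le_one V.ρ hsymm

end Representation

theorem inv_mem_doubleCoset_of_mul_self_mem {G : Type*} [Group G] {H : Subgroup G} {g s : G}
    (hgs : g⁻¹ * s ∈ H) (hss : s * s ∈ H) : g⁻¹ ∈ DoubleCoset.doubleCoset g (H : Set G) H :=
  DoubleCoset.mem_doubleCoset.2
    ⟨g⁻¹ * s, hgs, g⁻¹ * s * (s * s)⁻¹, mul_mem hgs (inv_mem hss), by group⟩

section ThreeByThreeMatrix

open Equiv

theorem isSymm_of_sum_row_eq_sum_col {N : Matrix (Fin 3) (Fin 3) ℕ}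
    (hsum : ∀ i, ∑ j, N i j = ∑ j, N j i) (h01 : N 0 1 = N 1 0) : N.IsSymm := by
  have h0 := hsum 0
  have h1 := hsum 1
  have h2 := hsum 2
  simp only [Fin.sum_univ_three] at h0 h1 h2
  refine Matrix.IsSymm.ext fun i j ↦ ?_
  fin_cases i <;> fin_cases j <;> simp only [Fin.mk_one, Fin.zero_eta, Fin.reduceFinMk] <;> omega

theorem exists_submatrix_isSymm {N : Matrix (Fin 3) (Fin 3) ℕ} {r : Fin 3 → ℕ}
    (hrow : ∀ i, ∑ j, N i j = r i) (hcol : ∀ j, ∑ i, N i j = r j) (h0 : r 0 = 1)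
    (h12 : r 1 = r 2) : ∃ τ : Perm (Fin 3), τ 0 = 0 ∧ (N.submatrix id τ).IsSymm := by
  by_cases h01 : N 0 1 = N 1 0
  · exact ⟨1, rfl, isSymm_of_sum_row_eq_sum_col (fun i ↦ (hrow i).trans (hcol i).symm) h01⟩
  refine ⟨swap 1 2, by decide, isSymm_of_sum_row_eq_sum_col (fun i ↦ ?_) ?_⟩
  · have hr : r (swap 1 2 i) = r i := apply_swap_eq_self h12 i
    calc ∑ j, N i (swap 1 2 j) = ∑ j, N i j := Equiv.sum_comp (swap 1 2) (N i)
      _ = r i := hrow i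
      _ = ∑ j, N j (swap 1 2 i) := by rw [hcol, hr]
  · have hrow0 := hrow 0
    have hcol0 := hcol 0
    simp only [Fin.sum_univ_three, h0] at hrow0 hcol0
    simp only [Matrix.submatrix_apply, id_eq, swap_apply_left,
      swap_apply_of_ne_of_ne (show (0 : Fin 3) ≠ 1 by decide) (show (0 : Fin 3) ≠ 2 by decide)]
    -- `N 0 0 = 0`, so row `0` and column `0` have one nonzero entry each, a `1`; as
    -- `N 0 1 ≠ N 1 0`, these two entries do not sit at transposed positions.
    omega

end ThreeByThreeMatrix

section Exchange

open Equiv Finset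

variable {X β : Type*}

/-- The permutation `s` exchanges the colourings `c` and `d`. -/
structure IsExchange (s : Perm X) (c d : X → β) : Prop where
  left (x : X) : c (s x) = d x
  right (x : X) : d (s x) = c x

theorem IsExchange.mul_self_apply {s : Perm X} {c d : X → β} (hs : IsExchange s c d) (x : X) :
    c ((s * s) x) = c x := by
  rw [Perm.mul_apply, hs.left, hs.right]

theorem IsExchange.mul_swap [DecidableEq X] {s : Perm X} {c d : X → β} (hs : IsExchange s c d)
    {a b : X} (hc : c a = c b) (hd : d a = d b) : IsExchange (s * swap a b) c d where
  left x := by rw [Perm.mul_apply, hs.left, apply_swap_eq_self hd]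
  right x := by rw [Perm.mul_apply, hs.right, apply_swap_eq_self hc]

variable [Fintype X] [DecidableEq β]

/-- The joint distribution of two colourings: the `(i, j)` entry counts the points coloured `i`
by `c` and `j` by `d`. -/
def jointCount (c d : X → β) : Matrix β β ℕ :=
  .of fun i j ↦ #{x | c x = i ∧ d x = j}

theorem jointCount_transpose (c d : X → β) : (jointCount c d).transpose = jointCount d c := by
  ext i j
  simp only [jointCount, Matrix.transpose_apply, Matrix.of_apply, and_comm]

theorem sum_jointCount_right [Fintype β] (c d : X → β) (i : β) :
    ∑ j, jointCount c d i j = #{x | c x = i} := by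
  rw [card_eq_sum_card_fiberwise (f := d) (t := univ) (by simp)]
  simp [jointCount, filter_filter]

theorem sum_jointCount_left [Fintype β] (c d : X → β) (j : β) :
    ∑ i, jointCount c d i j = #{x | d x = j} := by
  rw [← sum_jointCount_right d c, ← jointCount_transpose]
  rfl

theorem jointCount_perm_comp (τ : Perm β) (c d : X → β) :
    jointCount c (τ ∘ d) = (jointCount c d).submatrix id τ.symm := by
  ext i j
  simp [jointCount, ← Equiv.eq_symm_apply]

theorem exists_isExchange_of_isSymm {c d : X → β} (h : (jointCount c d).IsSymm) :
    ∃ s : Perm X, IsExchange s c d := by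
  have hfiber (ij : β × β) : Nonempty ({x // (d x, c x) = ij} ≃ {x // (c x, d x) = ij}) := by
    refine ⟨Fintype.equivOfCardEq ?_⟩
    simpa [Fintype.card_subtype, Prod.ext_iff, jointCount, and_comm] using h.apply ij.1 ij.2
  have hs := Equiv.ofFiberEquiv_map (f := fun x ↦ (d x, c x)) (g := fun x ↦ (c x, d x))
    fun ij ↦ (hfiber ij).some
  exact ⟨_, fun x ↦ congr(($(hs x)).1), fun x ↦ congr(($(hs x)).2)⟩

theorem exists_isExchange_perm_comp {c d : X → Fin 3}
    (hcd : ∀ i, #{x | c x = i} = #{x | d x = i}) (h0 : #{x | c x = 0} = 1)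
    (h12 : #{x | c x = 1} = #{x | c x = 2}) :
    ∃ τ : Perm (Fin 3), τ 0 = 0 ∧ ∃ s : Perm X, IsExchange s c (τ ∘ d) := by
  obtain ⟨τ, hτ, hsymm⟩ := exists_submatrix_isSymm (sum_jointCount_right c d)
    (fun j ↦ (sum_jointCount_left c d j).trans (hcd j).symm) h0 h12
  refine ⟨τ⁻¹, Perm.inv_eq_iff_eq.2 hτ.symm, exists_isExchange_of_isSymm ?_⟩
  rwa [jointCount_perm_comp]

end Exchange

section Blocks

open Equiv Finset

variable {α : Type*} {p : α → Prop}

theorem mem_colorStab_of_iff {u : Perm α} (hu : ∀ i, p (u i) ↔ p i) : u ∈ colorStab p := by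
  intro i j
  simp only [eq_iff_iff, hu]

theorem exists_optionHom_eq {w : Perm (Option α)} (hw : w none = none) :
    ∃ u : Perm α, optionHom α u = w := by
  classical
  exact ⟨removeNone w, (map_equiv_removeNone w).trans (by rw [hw, swap_self]; rfl)⟩

variable [DecidablePred p]

variable (p) in
/-- The colouring of `Option α` by the point `none`, the block `p` and its complement, which get
the colours `0`, `1` and `2`. -/
def blockColor : Option α → Fin 3
  | none => 0
  | some i => if p i then 1 else 2

theorem blockColor_eq_zero_iff {x : Option α} : blockColor p x = 0 ↔ x = none := by
  cases x with
  | none => simp [blockColor]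
  | some i => by_cases h : p i <;> simp [blockColor, h]

theorem blockColor_some_eq_iff {i j : α} :
    blockColor p (some i) = blockColor p (some j) ↔ (p i ↔ p j) := by
  by_cases hi : p i <;> by_cases hj : p j <;> simp [blockColor, hi, hj]

section Card

variable [Fintype α]

theorem card_filter_option {q : Option α → Prop} [DecidablePred q] (hq : ¬ q none) :
    #{x | q x} = #{i | q (some i)} := by
  have hmap : ({x | q x} : Finset (Option α)) = .map .some {i | q (some i)} := by
    ext x
    cases x <;> simp [hq]
  rw [hmap, card_map]

theorem card_blockColor_eq_zero : #{x | blockColor p x = 0} = 1 :=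
  card_eq_one.2 ⟨none, by ext x; simp [blockColor_eq_zero_iff]⟩

theorem card_blockColor_eq_one : #{x | blockColor p x = 1} = #{i | p i} := by
  rw [card_filter_option (by simp [blockColor])]
  simp [blockColor]

theorem card_blockColor_eq_two : #{x | blockColor p x = 2} = #{i | ¬ p i} := by
  rw [card_filter_option (by simp [blockColor])]
  simp [blockColor]

theorem exists_isExchange_blockColor (hp : 2 * #{i | p i} = Fintype.card α) (g : Perm (Option α)) :
    ∃ τ : Perm (Fin 3), τ 0 = 0 ∧
      ∃ s, IsExchange s (blockColor p) (τ ∘ blockColor p ∘ ⇑g⁻¹) := by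
  refine exists_isExchange_perm_comp (fun i ↦ card_equiv g (by simp)) card_blockColor_eq_zero ?_
  have hcompl := card_filter_add_card_filter_not (s := (univ : Finset α)) fun i ↦ p i
  rw [card_univ] at hcompl
  rw [card_blockColor_eq_one, card_blockColor_eq_two]
  omega

theorem exists_ne_blockColor_eq (hα : 6 ≤ Fintype.card α) (w : Perm (Option α)) :
    ∃ a b : α, a ≠ b ∧ (p a ↔ p b) ∧ blockColor p (w (some a)) = blockColor p (w (some b)) := by
  classical
  let S : Finset (Option α) := {none, w⁻¹ none}ᶜ
  let T : Finset (Fin 3) := {0}ᶜ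
  have hcard : #(T ×ˢ T) < #S := by
    have hle : #({none, w⁻¹ none} : Finset (Option α)) ≤ 2 := card_le_two
    have hT : #(T ×ˢ T) = 4 := by decide
    rw [hT, card_compl, Fintype.card_option]
    omega
  have hmaps : Set.MapsTo (fun x ↦ (blockColor p x, blockColor p (w x))) S ↑(T ×ˢ T) := by
    intro x hx
    simpa [S, T, blockColor_eq_zero_iff, Equiv.eq_symm_apply, and_comm] using hx
  obtain ⟨x, hx, y, hy, hxy, hcolor⟩ := exists_ne_map_eq_of_card_lt_of_maps_to hcard hmaps
  obtain ⟨a, rfl⟩ := Option.ne_none_iff_exists'.1 (show x ≠ none by rintro rfl; simp [S] at hx)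
  obtain ⟨b, rfl⟩ := Option.ne_none_iff_exists'.1 (show y ≠ none by rintro rfl; simp [S] at hy)
  exact ⟨a, b, fun h ↦ hxy (congrArg some h), blockColor_some_eq_iff.1 congr(($hcolor).1),
    congr(($hcolor).2)⟩

end Card

theorem exists_mem_colorStab_of_isExchange {τ : Perm (Fin 3)} (hτ : τ 0 = 0)
    {g s : Perm (Option α)} (hs : IsExchange s (blockColor p) (τ ∘ blockColor p ∘ ⇑g⁻¹)) :
    ∃ u ∈ colorStab p, optionHom α u = g⁻¹ * s := by
  have hcolor (x : Option α) : τ (blockColor p ((g⁻¹ * s) x)) = blockColor p x := hs.right x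
  obtain ⟨u, hu⟩ := exists_optionHom_eq (w := g⁻¹ * s)
    (blockColor_eq_zero_iff.1 (τ.injective ((hcolor none).trans hτ.symm)))
  refine ⟨u, fun i j ↦ ?_, hu⟩
  have hcolor' (i : α) : τ (blockColor p (some (u i))) = blockColor p (some i) := by
    rw [← hcolor (some i), ← hu]; rfl
  rw [eq_iff_iff, eq_iff_iff, ← blockColor_some_eq_iff, ← blockColor_some_eq_iff, ← hcolor' i,
    ← hcolor' j, τ.injective.eq_iff]

theorem exists_even_of_isExchange [Fintype α] [DecidableEq α] {s : Perm (Option α)}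
    {d : Option α → Fin 3} (hs : IsExchange s (blockColor p) d) :
    ∃ u : Perm α, (∀ i, p (u i) ↔ p i) ∧ Perm.sign u = 1 ∧ optionHom α u = s * s := by
  obtain ⟨u, hu⟩ := exists_optionHom_eq (w := s * s)
    (blockColor_eq_zero_iff.1 (hs.mul_self_apply none))
  refine ⟨u, fun i ↦ ?_, ?_, hu⟩
  · rw [← blockColor_some_eq_iff, ← hs.mul_self_apply (some i), ← hu]
    rfl
  · rw [← optionCongr_sign, ← Int.units_mul_self (Perm.sign s), ← map_mul, ← hu]
    rfl

end Blocks

section MultFree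

open Equiv Finset

variable {α : Type} [Fintype α] [DecidableEq α] {p : α → Prop} [DecidablePred p]

theorem isMultFree_map_optionHom (hp : 2 * #{i | p i} = Fintype.card α)
    (hα : 6 ≤ Fintype.card α) {K : Subgroup (Perm α)}
    (heven : ∀ u : Perm α, (∀ i, p (u i) ↔ p i) → Perm.sign u = 1 → u ∈ K)
    (hswap : ∀ u ∈ colorStab p, ∀ a b, a ≠ b → (p a ↔ p b) → u ∈ K ∨ u * swap a b ∈ K) :
    IsMultFree (K.map (optionHom α)) := by
  refine isMultFree_of_inv_mem_doubleCoset_s7 _ fun g ↦ ?_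
  obtain ⟨τ, hτ, s, hs⟩ := exists_isExchange_blockColor hp g
  have hsq {t : Perm (Option α)} (ht : IsExchange t (blockColor p) (τ ∘ blockColor p ∘ ⇑g⁻¹)) :
      t * t ∈ K.map (optionHom α) := by
    obtain ⟨v, hv, hsign, hvt⟩ := exists_even_of_isExchange ht
    exact ⟨v, heven v hv hsign, hvt⟩
  obtain ⟨u, hu, hus⟩ := exists_mem_colorStab_of_isExchange hτ hs
  obtain ⟨a, b, hab, hpab, hcolor⟩ := exists_ne_blockColor_eq (p := p) hα g⁻¹
  rcases hswap u hu a b hab hpab with h | h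
  · exact inv_mem_doubleCoset_of_mul_self_mem ⟨u, h, hus⟩ (hsq hs)
  · refine inv_mem_doubleCoset_of_mul_self_mem (s := s * swap (some a) (some b))
      ⟨u * swap a b, h, ?_⟩ (hsq (hs.mul_swap (blockColor_some_eq_iff.2 hpab) congr(τ $hcolor)))
    rw [map_mul, hus, mul_assoc]
    exact congr(g⁻¹ * (s * $(optionCongr_swap a b)))

theorem isMultFree_map_of_mem_iff_sign_eq (hp : 2 * #{i | p i} = Fintype.card α)
    (hα : 6 ≤ Fintype.card α) {χ : Perm α → ℤˣ} (hχ_one : χ 1 = 1)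
    (hχ_mul : ∀ u v : Perm α, (∀ i, p (v i) ↔ p i) → χ (u * v) = χ u) {K : Subgroup (Perm α)}
    (hK : ∀ u, u ∈ K ↔ u ∈ colorStab p ∧ Perm.sign u = χ u) :
    IsMultFree (K.map (optionHom α)) := by
  refine isMultFree_map_optionHom hp hα (fun u hu hsign ↦ (hK u).2 ⟨?_, ?_⟩) ?_
  · exact mem_colorStab_of_iff hu
  · rw [hsign, ← hχ_one, ← hχ_mul 1 u hu, one_mul]
  · intro u hu a b hab hpab
    have hswap (i : α) : p (swap a b i) ↔ p i := iff_of_eq (apply_swap_eq_self (propext hpab) i)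
    have hmem : u * swap a b ∈ colorStab p := mul_mem hu (mem_colorStab_of_iff hswap)
    rcases eq_or_ne (Perm.sign u) (χ u) with h | h
    · exact Or.inl ((hK u).2 ⟨hu, h⟩)
    · refine Or.inr ((hK _).2 ⟨hmem, ?_⟩)
      rw [hχ_mul u _ hswap, Perm.sign_mul, Perm.sign_swap hab, mul_neg_one,
        Int.units_ne_iff_eq_neg.1 h, neg_neg]

end MultFree

open Finset in
theorem stmt7_general {α : Type} [Fintype α] [DecidableEq α] (p : α → Prop) [DecidablePred p]
    (hp : 2 * #{i | p i} = Fintype.card α) (hα : 6 ≤ Fintype.card α) (Γ : Subgroup (Equiv.Perm α))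
    (hΓ : ∀ g : Equiv.Perm α, g ∈ Γ ↔ g ∈ colorStab p ∧
      Equiv.Perm.sign g = if ∀ i, p i → p (g i) then 1 else -1) :
    IsMultFree ((colorStab p).map (optionHom α)) ∧
      IsMultFree ((colorStab p ⊓ alternatingGroup α).map (optionHom α)) ∧
      IsMultFree (Γ.map (optionHom α)) := by
  refine ⟨?_, ?_, isMultFree_map_of_mem_iff_sign_eq hp hα ?_ (fun u v hv ↦ ?_) hΓ⟩
  · exact isMultFree_map_optionHom hp hα (fun u hu _ ↦ mem_colorStab_of_iff hu)
      fun u hu _ _ _ _ ↦ Or.inl hu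
  · exact isMultFree_map_of_mem_iff_sign_eq hp hα (χ := 1) rfl (fun _ _ _ ↦ rfl) fun u ↦ Iff.rfl
  · exact if_pos fun _ hi ↦ hi
  · have hψ : (∀ i, p i → p ((u * v) i)) ↔ ∀ i, p i → p (u i) :=
      v.forall_congr fun i ↦ imp_congr_left (hv i).symm
    simp only [hψ]

theorem stmt7 (k : ℕ) (hk : 10 ≤ k)
    -- `W = S_k ≀ S_2`, the stabilizer of the pair of blocks `{1,…,k}`, `{k+1,…,2k}`
    (W : Subgroup (Equiv.Perm (Fin (2 * k))))
    (hW : W = colorStab (fun i : Fin (2 * k) => ((i : ℕ) < k : Prop)))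
    -- `Γₖ = {g ∈ W : sgn g = ψ g}`, where `ψ g = 1` iff `g` preserves the block `{1,…,k}`
    (Γ : Subgroup (Equiv.Perm (Fin (2 * k))))
    (hΓ : ∀ g : Equiv.Perm (Fin (2 * k)), g ∈ Γ ↔ g ∈ W ∧
      Equiv.Perm.sign g =
        (if ∀ i : Fin (2 * k), (i : ℕ) < k → ((g i : ℕ) < k) then 1 else -1)) :
    IsMultFree (W.map (optionHom (Fin (2 * k)))) ∧
      IsMultFree ((W ⊓ alternatingGroup (Fin (2 * k))).map (optionHom (Fin (2 * k)))) ∧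
      IsMultFree (Γ.map (optionHom (Fin (2 * k)))) := by
  subst hW
  refine stmt7_general _ ?_ (by rw [Fintype.card_fin]; omega) Γ (by convert hΓ)
  rw [Fin.card_filter_val_lt, Fintype.card_fin, min_eq_right (by omega)]
end
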